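/- For every ε > 0 there exist δ > 0 and c > 0, depending only on ε, such that for every odd prime p, every A ⊆ F_p, and all sets B1, B2, B3 ⊆ F_p with |B1| = |B2| = |B3| = n, n > p^ε, and |B3 − B1·B2| ≤ n²·p^{−ε}, one has |{ (a+b1)/(a·b2+b3) : a∈A, b1∈B1, b2∈B2, b3∈B3, a·b2+b3 ≠ 0 }| ≥ c·min{ p, |A|·p^δ }. -/

import Mathlib

open Finset

/-- The product set `S·T = {s·t : s ∈ S, t ∈ T}`. -/
def prodSet (p : ℕ) (S T : Finset (ZMod p)) : Finset (ZMod p) :=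
  (S ×ˢ T).image fun x => x.1 * x.2

/-- The difference set `S − T = {s − t : s ∈ S, t ∈ T}`. -/
def diffSet (p : ℕ) (S T : Finset (ZMod p)) : Finset (ZMod p) :=
  (S ×ˢ T).image fun x => x.1 - x.2

open scoped Pointwise

theorem bsg {G : Type*} [AddCommGroup G] [Fintype G] [DecidableEq G] (E : Finset G) (K : ℝ)
    (hK : 1 ≤ K) (hE : E.Nonempty)
    (h : (#E : ℝ) ^ 3 ≤ K * ∑ x : G, (#(E.filter fun a => a - x ∈ E) : ℝ) ^ 2) :
    ∃ H ⊆ E, (#E : ℝ) ≤ 8 * K * #H ∧ (#(H - H) : ℝ) ≤ 8192 * K ^ 3 * #E := by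
  classical
  set N : ℝ := (#E : ℝ) with hN
  have hNpos : 0 < N := by rw [hN]; exact_mod_cast hE.card_pos
  have hK0 : 0 < K := by linarith
  set r : G → ℝ := fun x => (#(E.filter fun a => a - x ∈ E) : ℝ) with hr
  set τ : ℝ := N / (32 * K) with hτ
  have hτpos : 0 < τ := by positivity
  set B : G → Finset (G × G) := fun x =>
    ((E.filter fun a => a - x ∈ E) ×ˢ (E.filter fun a => a - x ∈ E)).filter
      fun q => r (q.1 - q.2) < τ with hB
  have hsum1 : ∑ x, r x = N ^ 2 := by
    have : ∑ x, #(E.filter fun a => a - x ∈ E) = #E * #E := by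
      simp only [card_filter]
      rw [sum_comm]
      have : ∀ a ∈ E, ∑ x, (if a - x ∈ E then 1 else 0) = #E := by
        intro a ha
        rw [← card_filter]
        refine card_bij (fun x _ => a - x) ?_ ?_ ?_
        · intro x hx; simpa using hx
        · intro x _ y _ hxy; simpa using hxy
        · intro b hb; exact ⟨a - b, by simpa using hb, by simp⟩
      rw [sum_congr rfl this]; simp
    simp only [hr, hN]; rw [sq]; exact_mod_cast this
  have hsum2 : ∑ x, (#(B x) : ℝ) ≤ τ * N ^ 2 := by
    have h1 : ∑ x, (#(B x) : ℝ)
        = ∑ q ∈ (E ×ˢ E).filter (fun q => r (q.1 - q.2) < τ), r (q.1 - q.2) := by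
      have e1 : ∀ x, #(B x) = ∑ q ∈ (E ×ˢ E).filter (fun q => r (q.1 - q.2) < τ),
          if (q.1 - x ∈ E ∧ q.2 - x ∈ E) then 1 else 0 := by
        intro x
        rw [← card_filter]
        congr 1
        ext q
        simp only [hB, mem_filter, mem_product]
        tauto
      have e2 : ∑ x, #(B x) = ∑ q ∈ (E ×ˢ E).filter (fun q => r (q.1 - q.2) < τ),
          #(E.filter fun a => a - (q.1 - q.2) ∈ E) := by
        simp only [e1]
        rw [sum_comm]
        refine sum_congr rfl fun q hq => ?_
        rw [← card_filter]
        refine card_bij (fun x _ => q.1 - x) ?_ ?_ ?_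
        · intro x hx
          simp only [mem_filter, mem_univ, true_and] at hx ⊢
          refine ⟨hx.1, ?_⟩
          have : q.1 - x - (q.1 - q.2) = q.2 - x := by abel
          rw [this]; exact hx.2
        · intro x _ y _ hxy; simpa using hxy
        · intro b hb
          simp only [mem_filter, mem_univ, true_and] at hb ⊢
          refine ⟨q.1 - b, ⟨by simpa using hb.1, ?_⟩, by simp⟩
          have : q.2 - (q.1 - b) = b - (q.1 - q.2) := by abel
          rw [this]; exact hb.2
      simp only [hr]
      exact_mod_cast e2
    rw [h1]
    calc _ ≤ ∑ q ∈ (E ×ˢ E).filter (fun q => r (q.1 - q.2) < τ), τ := by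
            refine sum_le_sum fun q hq => ?_
            exact (mem_filter.1 hq).2.le
      _ = #((E ×ˢ E).filter (fun q => r (q.1 - q.2) < τ)) * τ := by simp
      _ ≤ #(E ×ˢ E) * τ := by
            gcongr; exact filter_subset _ _
      _ = τ * N ^ 2 := by rw [card_product, hN]; push_cast; ring
  obtain ⟨x, hx⟩ : ∃ x, 0 < r x ^ 2 - 16 * #(B x) - r x * (N / (4 * K)) := by
    by_contra hcon
    push Not at hcon
    have := sum_nonpos (s := univ) fun x _ => hcon x
    rw [sum_sub_distrib, sum_sub_distrib, ← mul_sum, ← sum_mul, hsum1] at this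
    have h2 : N ^ 3 / K ≤ ∑ x, r x ^ 2 := by
      rw [div_le_iff₀ hK0]; linarith [mul_comm K (∑ x, r x ^ 2)]
    have h3 : 16 * (τ * N ^ 2) = N ^ 3 / K / 2 := by
      rw [hτ]; field_simp; norm_num
    have h4 : N ^ 2 * (N / (4 * K)) = N ^ 3 / K / 4 := by field_simp
    have h5 : 0 < N ^ 3 / K := by positivity
    linarith
  have hr0 : 0 ≤ r x := by simp [hr]
  have hBx0 : (0 : ℝ) ≤ #(B x) := by positivity
  have hrpos : 0 < r x := by
    rcases hr0.eq_or_lt with h0 | h0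
    · rw [← h0] at hx; nlinarith
    · exact h0
  have hrx : N / (4 * K) < r x := by nlinarith
  have hBx : 16 * (#(B x) : ℝ) ≤ r x ^ 2 := by
    have : 0 ≤ r x * (N / (4 * K)) := by positivity
    linarith
  set F := E.filter fun a => a - x ∈ E with hF
  have hrF : r x = #F := rfl
  set bd : G → Finset G := fun a => F.filter fun b => r (a - b) < τ with hbd
  set H := F.filter fun a => (#(bd a) : ℝ) ≤ r x / 4 with hH
  have hHE : H ⊆ E := (filter_subset _ _).trans (filter_subset _ _)
  have hHc : 3 / 4 * r x ≤ #H := by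
    have h1 : (#(B x) : ℝ) = ∑ a ∈ F, (#(bd a) : ℝ) := by
      have : #(B x) = ∑ a ∈ F, #(bd a) := by
        simp only [hB, hbd, card_filter]
        rw [sum_product]
      exact_mod_cast this
    have h2 : (#(F.filter fun a => ¬ (#(bd a) : ℝ) ≤ r x / 4) : ℝ) * (r x / 4) ≤ #(B x) := by
      rw [h1, ← nsmul_eq_mul, ← sum_const]
      refine (sum_le_sum ?_).trans (sum_le_sum_of_subset_of_nonneg (filter_subset _ _) ?_)
      · intro a ha
        have := (mem_filter.1 ha).2
        linarith
      · intros; positivity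
    have h3 : (#H : ℝ) + #(F.filter fun a => ¬ (#(bd a) : ℝ) ≤ r x / 4) = r x := by
      rw [hrF]; exact_mod_cast card_filter_add_card_filter_not (s := F) _
    nlinarith
  refine ⟨H, hHE, ?_, ?_⟩
  · have : N / (4 * K) * (8 * K) = 2 * N := by field_simp; norm_num
    have h6 : 3 / 4 * (N / (4 * K)) * (8 * K) ≤ #H * (8 * K) := by
      gcongr; linarith
    nlinarith
  · set fib : G → Finset ((G × G) × (G × G)) := fun d =>
      ((E ×ˢ E) ×ˢ (E ×ˢ E)).filter fun z => (z.1.1 - z.1.2) - (z.2.1 - z.2.2) = d with hfib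
    have hlow : ∀ d ∈ H - H, r x / 2 * τ ^ 2 ≤ #(fib d) := by
      intro d hd
      obtain ⟨a, ha, b, hb, rfl⟩ := mem_sub.1 hd
      have ha2 := (mem_filter.1 ha).2
      have hb2 := (mem_filter.1 hb).2
      set Gd := F.filter fun c => c ∉ bd a ∧ c ∉ bd b with hGd
      have hGc : r x / 2 ≤ #Gd := by
        have : F ⊆ Gd ∪ (bd a ∪ bd b) := by
          intro c hc
          simp only [mem_union, hGd, mem_filter]
          tauto
        have h1 : #F ≤ #Gd + (#(bd a) + #(bd b)) :=
          (card_le_card this).trans ((card_union_le _ _).trans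
            (Nat.add_le_add_left (card_union_le _ _) _))
        have h2 : (#F : ℝ) ≤ #Gd + (#(bd a) + #(bd b)) := by exact_mod_cast h1
        rw [← hrF] at h2
        linarith
      have hinj : ∑ c ∈ Gd, #(E.filter fun u => u - (a - c) ∈ E) *
          #(E.filter fun u => u - (b - c) ∈ E) ≤ #(fib (a - b)) := by
        simp only [← card_product]
        rw [← card_sigma]
        refine card_le_card_of_injOn
          (fun w => ((w.2.1, w.2.1 - (a - w.1)), (w.2.2, w.2.2 - (b - w.1)))) ?_ ?_
        · rintro ⟨c, u, v⟩ hw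
          simp only [coe_sigma, Set.mem_sigma_iff, mem_coe, mem_product, mem_filter] at hw
          simp only [hfib, coe_filter, mem_product, Set.mem_ofPred_eq]
          refine ⟨⟨hw.2.1, hw.2.2⟩, by abel⟩
        · rintro ⟨c, u, v⟩ _ ⟨c', u', v'⟩ _ heq
          simp only [Prod.mk.injEq] at heq
          obtain ⟨⟨rfl, h1⟩, rfl, h2⟩ := heq
          simp at h1
          subst h1; rfl
      have hinj' : ∑ c ∈ Gd, r (a - c) * r (b - c) ≤ #(fib (a - b)) := by
        simp only [hr]; exact_mod_cast hinj
      refine le_trans ?_ hinj'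
      calc r x / 2 * τ ^ 2 ≤ #Gd * τ ^ 2 := by gcongr
        _ = ∑ c ∈ Gd, τ ^ 2 := by simp
        _ ≤ _ := by
          refine sum_le_sum fun c hc => ?_
          have h1 := (mem_filter.1 hc)
          have h2 : τ ≤ r (a - c) := by
            by_contra hh
            exact h1.2.1 (mem_filter.2 ⟨h1.1, not_le.1 hh⟩)
          have h3 : τ ≤ r (b - c) := by
            by_contra hh
            exact h1.2.2 (mem_filter.2 ⟨h1.1, not_le.1 hh⟩)
          rw [sq]; gcongr
    have hup : ∑ d ∈ H - H, (#(fib d) : ℝ) ≤ N ^ 4 := by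
      have : ∑ d ∈ H - H, #(fib d) ≤ #((E ×ˢ E) ×ˢ (E ×ˢ E)) := by
        rw [← card_biUnion]
        · apply card_le_card
          intro z hz
          obtain ⟨d, _, hz⟩ := mem_biUnion.1 hz
          exact (mem_filter.1 hz).1
        · intro d _ d' _ hdd
          rw [Function.onFun, disjoint_left]
          intro z hz hz'
          exact hdd ((mem_filter.1 hz).2.symm.trans (mem_filter.1 hz').2)
      simp only [card_product] at this
      calc ∑ d ∈ H - H, (#(fib d) : ℝ) ≤ ((#E * #E * (#E * #E) : ℕ) : ℝ) := by exact_mod_cast this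
        _ = N ^ 4 := by push_cast; rw [hN]; ring
    have h7 : #(H - H) * (r x / 2 * τ ^ 2) ≤ N ^ 4 := by
      refine le_trans ?_ hup
      rw [← nsmul_eq_mul, ← sum_const]
      exact sum_le_sum hlow
    have h8 : #(H - H) * (N / (4 * K) / 2 * τ ^ 2) ≤ N ^ 4 := by
      refine le_trans ?_ h7
      gcongr
    have h9 : (#(H - H) : ℝ) * (N / (4 * K) / 2 * τ ^ 2) = #(H - H) * N ^ 3 / (8192 * K ^ 3) := by
      rw [hτ]; field_simp; ring
    rw [h9, div_le_iff₀ (by positivity)] at h8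
    have h10 : #(H - H) * N ^ 3 ≤ (8192 * K ^ 3 * N) * N ^ 3 := by
      calc _ ≤ _ := h8
        _ = _ := by ring
    exact le_of_mul_le_mul_right h10 (by positivity)


def RS {p : ℕ} (H : Finset (ZMod p)) (L : ℝ) (ρ : ZMod p) : Prop :=
  (#(H - ρ • H) : ℝ) ≤ L * #H

set_option linter.unusedSectionVars false

section
variable {p : ℕ} [Fact p.Prime] {H : Finset (ZMod p)}

theorem RS.mono {L L' : ℝ} {ρ : ZMod p} (h : RS H L ρ) (hL : L ≤ L') : RS H L' ρ :=
  le_trans h (by gcongr)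

theorem card_smul_aux {ρ : ZMod p} (hρ : ρ ≠ 0) (S : Finset (ZMod p)) : #(ρ • S) = #S :=
  card_image_of_injective _ (mul_right_injective₀ hρ)

theorem smul_sub_aux (ρ : ZMod p) (S T : Finset (ZMod p)) : ρ • (S - T) = ρ • S - ρ • T := by
  ext z
  simp only [mem_smul_finset, mem_sub, smul_eq_mul]
  constructor
  · rintro ⟨_, ⟨a, ha, b, hb, rfl⟩, rfl⟩
    exact ⟨ρ * a, ⟨a, ha, rfl⟩, ρ * b, ⟨b, hb, rfl⟩, by ring⟩
  · rintro ⟨_, ⟨a, ha, rfl⟩, _, ⟨b, hb, rfl⟩, rfl⟩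
    exact ⟨a - b, ⟨a, ha, b, hb, rfl⟩, by ring⟩

theorem card_sub_comm_aux (S T : Finset (ZMod p)) : #(S - T) = #(T - S) := by
  rw [← card_neg (S - T), neg_sub]

theorem RS.zero (hH : H.Nonempty) {L : ℝ} (hL : 1 ≤ L) : RS H L 0 := by
  unfold RS
  rw [zero_smul_finset hH]
  simp
  nlinarith [(Nat.cast_nonneg #H : (0 : ℝ) ≤ #H)]

theorem RS.inv {L : ℝ} {ρ : ZMod p} (hρ : ρ ≠ 0) (h : RS H L ρ) : RS H L ρ⁻¹ := by
  unfold RS at *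
  have : #(H - ρ⁻¹ • H) = #(H - ρ • H) := by
    rw [← card_smul_aux hρ (H - ρ⁻¹ • H), smul_sub_aux, smul_smul, mul_inv_cancel₀ hρ, one_smul,
      card_sub_comm_aux]
  rwa [this]

theorem RS.mul (hH : H.Nonempty) {L1 L2 : ℝ} {ρ1 ρ2 : ZMod p} (h1L : 1 ≤ L1) (h2L : 1 ≤ L2)
    (h1 : RS H L1 ρ1) (h2 : RS H L2 ρ2) : RS H (L1 * L2) (ρ1 * ρ2) := by
  rcases eq_or_ne ρ1 0 with rfl | hρ
  · rw [zero_mul]; exact RS.zero hH (by nlinarith)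
  unfold RS at *
  have h := ruzsa_triangle_inequality_sub_sub_sub H (ρ1 • H) ((ρ1 * ρ2) • H)
  rw [card_smul_aux hρ, ← smul_smul, ← smul_sub_aux, card_smul_aux hρ,
    card_sub_comm_aux (ρ2 • H), smul_smul] at h
  have h' : (#(H - (ρ1 * ρ2) • H) : ℝ) * #H ≤ #(H - ρ1 • H) * #(H - ρ2 • H) := by exact_mod_cast h
  have hpos : (0 : ℝ) < #H := by exact_mod_cast hH.card_pos
  have h3 : (#(H - ρ1 • H) : ℝ) * #(H - ρ2 • H) ≤ (L1 * #H) * (L2 * #H) := by gcongr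
  refine le_of_mul_le_mul_right (h'.trans (h3.trans (le_of_eq (by ring)))) hpos

theorem RS.cover (hH : H.Nonempty) {L : ℝ} {ρ : ZMod p} (h : RS H L ρ) :
    ∃ F : Finset (ZMod p), (#F : ℝ) ≤ L ∧ ρ • H ⊆ F + (H - H) := by
  obtain ⟨F, _, hF, hs⟩ := ruzsa_covering_add (A := -(ρ • H)) (B := H) (K := L) hH
    (by unfold RS at h; rwa [neg_add_eq_sub, ← card_neg, neg_sub,
          card_sub_comm_aux] at * )
  refine ⟨-F, by simpa using hF, ?_⟩
  have := neg_subset_neg hs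
  rw [neg_neg, neg_add, neg_sub] at this
  exact this

theorem cover_neg {F : Finset (ZMod p)} {ρ : ZMod p} (h : ρ • H ⊆ F + (H - H)) :
    (-ρ) • H ⊆ (-F) + (H - H) := by
  have := neg_subset_neg h
  rw [neg_add, neg_sub] at this
  rwa [neg_smul_finset]

theorem RS.of_cover (hH : H.Nonempty) {K L1 L2 : ℝ} (hK : (#(H - H) : ℝ) ≤ K * #H)
    {ρ1 ρ2 : ZMod p} {F1 F2 : Finset (ZMod p)} (h1L : (#F1 : ℝ) ≤ L1) (h2L : (#F2 : ℝ) ≤ L2)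
    (h1 : ρ1 • H ⊆ F1 + (H - H)) (h2 : ρ2 • H ⊆ F2 + (H - H)) :
    RS H (L1 * L2 * K ^ 5) (ρ1 + ρ2) := by
  unfold RS
  have hpos : (0 : ℝ) < #H := by exact_mod_cast hH.card_pos
  have hsub : H - (ρ1 + ρ2) • H ⊆ ((-F1) + (-F2)) + (3 • H - 2 • H) := by
    calc H - (ρ1 + ρ2) • H ⊆ H - (ρ1 • H + ρ2 • H) := by
          apply sub_subset_sub_left
          intro z hz
          obtain ⟨x, hx, rfl⟩ := mem_smul_finset.1 hz
          rw [add_smul]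
          exact add_mem_add (smul_mem_smul_finset hx) (smul_mem_smul_finset hx)
      _ ⊆ H - ((F1 + (H - H)) + (F2 + (H - H))) :=
          sub_subset_sub_left (add_subset_add h1 h2)
      _ = ((-F1) + (-F2)) + (3 • H - 2 • H) := by
          have e3 : 3 • H = H + H + H := by rw [succ_nsmul, two_nsmul]
          rw [e3, two_nsmul]
          simp only [sub_eq_add_neg, neg_add, neg_neg]
          generalize -H = N
          generalize -F1 = G1
          generalize -F2 = G2
          simp only [add_assoc, add_comm, add_left_comm]
  have hpl := pluennecke_ruzsa_inequality_nsmul_sub_nsmul_sub hH H 3 2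
  have hpl' : (#(3 • H - 2 • H) : ℝ) ≤ (#(H - H) / #H) ^ 5 * #H := by
    have := (NNRat.cast_le (K := ℝ)).2 hpl
    push_cast at this
    simpa using this
  have hq : (#(H - H) : ℝ) / #H ≤ K := by rwa [div_le_iff₀ hpos]
  have hc : #(H - (ρ1 + ρ2) • H) ≤ #F1 * #F2 * #(3 • H - 2 • H) := by
    refine (card_le_card hsub).trans ((card_add_le).trans ?_)
    gcongr
    refine card_add_le.trans ?_
    simp
  calc (#(H - (ρ1 + ρ2) • H) : ℝ) ≤ #F1 * #F2 * #(3 • H - 2 • H) := by exact_mod_cast hc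
    _ ≤ L1 * L2 * (K ^ 5 * #H) := by
        have : (0 : ℝ) ≤ L1 := (Nat.cast_nonneg _).trans h1L
        have : (0 : ℝ) ≤ L2 := (Nat.cast_nonneg _).trans h2L
        gcongr
        refine hpl'.trans ?_
        gcongr
    _ = _ := by ring

theorem RS.add (hH : H.Nonempty) {K L : ℝ} (hK : (#(H - H) : ℝ) ≤ K * #H) (hK1 : 1 ≤ K)
    (hL : K ≤ L)
    {ρ1 ρ2 : ZMod p} (h1 : RS H L ρ1) (h2 : RS H L ρ2) : RS H (L ^ 7) (ρ1 + ρ2) := by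
  obtain ⟨F1, hF1, hs1⟩ := h1.cover hH
  obtain ⟨F2, hF2, hs2⟩ := h2.cover hH
  refine (RS.of_cover hH hK hF1 hF2 hs1 hs2).mono ?_
  have hL0 : 0 ≤ L := by linarith
  calc L * L * K ^ 5 ≤ L * L * L ^ 5 := by gcongr
    _ = _ := by ring

theorem RS.sub (hH : H.Nonempty) {K L : ℝ} (hK : (#(H - H) : ℝ) ≤ K * #H) (hK1 : 1 ≤ K)
    (hL : K ≤ L)
    {ρ1 ρ2 : ZMod p} (h1 : RS H L ρ1) (h2 : RS H L ρ2) : RS H (L ^ 7) (ρ1 - ρ2) := by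
  obtain ⟨F1, hF1, hs1⟩ := h1.cover hH
  obtain ⟨F2, hF2, hs2⟩ := h2.cover hH
  rw [sub_eq_add_neg]
  refine (RS.of_cover hH hK hF1 (F2 := -F2) (by simpa using hF2) hs1 (cover_neg hs2)).mono ?_
  have hL0 : 0 ≤ L := by linarith
  calc L * L * K ^ 5 ≤ L * L * L ^ 5 := by gcongr
    _ = _ := by ring

theorem RS.quot (hH : H.Nonempty) {K L : ℝ} (hK : (#(H - H) : ℝ) ≤ K * #H) (hK1 : 1 ≤ K)
    (hL : K ≤ L) {a b c d : ZMod p} (ha : RS H L a) (hb : RS H L b) (hc : RS H L c)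
    (hd : RS H L d) (hcd : c ≠ d) : RS H (L ^ 14) ((a - b) * (c - d)⁻¹) := by
  have hL1 : 1 ≤ L ^ 7 := one_le_pow₀ (hK1.trans hL)
  have := RS.mul hH hL1 hL1 (RS.sub hH hK hK1 hL ha hb)
    (RS.inv (sub_ne_zero.2 hcd) (RS.sub hH hK hK1 hL hc hd))
  refine this.mono (le_of_eq (by ring))

theorem gk_step (hH : H.Nonempty) {K L : ℝ} (hK : (#(H - H) : ℝ) ≤ K * #H) (hK1 : 1 ≤ K)
    (hL : K ≤ L) (P : Finset (ZMod p)) (hP : 2 ≤ #P) (hPS : ∀ x ∈ P, RS H L x) :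
    (∀ ρ, RS H (L ^ 735) ρ) ∨
      ∃ P' : Finset (ZMod p), #P' = #P ^ 2 ∧ ∀ x ∈ P', RS H (L ^ 735) x := by
  have hL1 : 1 ≤ L := hK1.trans hL
  set Qt : ZMod p → Prop := fun ξ => ∃ a ∈ P, ∃ b ∈ P, ∃ c ∈ P, ∃ d ∈ P, c ≠ d ∧
    ξ = (a - b) * (c - d)⁻¹ with hQt
  have hQS : ∀ ξ, Qt ξ → RS H (L ^ 14) ξ := by
    rintro ξ ⟨a, ha, b, hb, c, hc, d, hd, hcd, rfl⟩
    exact RS.quot hH hK hK1 hL (hPS _ ha) (hPS _ hb) (hPS _ hc) (hPS _ hd) hcd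
  by_cases hall : ∀ ξ, Qt ξ
  · left
    intro ρ
    exact (hQS ρ (hall ρ)).mono (pow_le_pow_right₀ hL1 (by norm_num))
  right
  obtain ⟨x0, hx0, y0, hy0, hxy⟩ := one_lt_card.1 (show 1 < #P by omega)
  have h0 : Qt 0 := ⟨x0, hx0, x0, hx0, x0, hx0, y0, hy0, hxy, by simp⟩
  obtain ⟨ξ, hξ, hξ1⟩ : ∃ ξ, Qt ξ ∧ ¬ Qt (ξ + 1) := by
    by_contra hcon
    push Not at hcon
    apply hall
    have hn : ∀ n : ℕ, Qt (n : ZMod p) := by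
      intro n
      induction n with
      | zero => simpa using h0
      | succ k ih => push_cast; exact hcon _ ih
    intro ξ
    have := hn ξ.val
    rwa [ZMod.natCast_zmod_val] at this
  refine ⟨(P ×ˢ P).image fun q => q.1 + (ξ + 1) * q.2, ?_, ?_⟩
  · rw [card_image_of_injOn, card_product, sq]
    rintro ⟨a, b⟩ hab ⟨c, d⟩ hcd heq
    simp only [coe_product, Set.mem_prod, mem_coe] at hab hcd heq
    by_cases hbd : d = b
    · subst hbd
      simp at heq
      rw [heq]
    · exfalso
      apply hξ1
      refine ⟨a, hab.1, c, hcd.1, d, hcd.2, b, hab.2, hbd, ?_⟩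
      have : d - b ≠ 0 := sub_ne_zero.2 hbd
      field_simp
      linear_combination -heq
  · intro z hz
    obtain ⟨⟨a, b⟩, hab, rfl⟩ := mem_image.1 hz
    simp only [mem_product] at hab
    have hone : RS H (L ^ 14) 1 := by
      unfold RS; rw [one_smul]
      refine hK.trans ?_
      gcongr
      exact hL.trans (le_self_pow₀ hL1 (by norm_num))
    have e1 : RS H ((L ^ 14) ^ 7) (ξ + 1) :=
      RS.add hH hK hK1 (hL.trans (le_self_pow₀ hL1 (by norm_num))) (hQS ξ hξ) hone
    have e2 : RS H (L ^ 105) ((ξ + 1) * b) :=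
      (RS.mul hH (one_le_pow₀ (one_le_pow₀ hL1)) hL1 e1 (hPS _ hab.2)).mono (by
        rw [← pow_mul, ← pow_succ]
        exact pow_le_pow_right₀ hL1 (by norm_num))
    have e3 : RS H (L ^ 105) a := (hPS _ hab.1).mono (le_self_pow₀ hL1 (by norm_num))
    have e4 := RS.add hH hK hK1 (hL.trans (le_self_pow₀ hL1 (by norm_num))) e3 e2
    exact e4.mono (le_of_eq (by rw [← pow_mul]))

theorem gk_iter (hH : H.Nonempty) {K : ℝ} (hK : (#(H - H) : ℝ) ≤ K * #H) (hK1 : 1 ≤ K) (m : ℕ) :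
    ∀ (L : ℝ), K ≤ L → ∀ (P : Finset (ZMod p)), 2 ≤ #P → (∀ x ∈ P, RS H L x) →
      p < #P ^ (2 ^ m) → ∀ ρ, RS H (L ^ (735 ^ m)) ρ := by
  induction m with
  | zero =>
    intro L hL P hP _ hlt
    exfalso
    have := card_le_univ P
    rw [ZMod.card] at this
    simp at hlt
    omega
  | succ m ih =>
    intro L hL P hP hPS hlt ρ
    have hL1 : 1 ≤ L := hK1.trans hL
    rcases gk_step hH hK hK1 hL P hP hPS with h | ⟨P', hc, hP'⟩
    · refine (h ρ).mono (pow_le_pow_right₀ hL1 ?_)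
      rw [pow_succ]
      exact Nat.le_mul_of_pos_left _ (by positivity)
    · have := ih (L ^ 735) (hL.trans (le_self_pow₀ hL1 (by norm_num))) P'
        (by rw [hc]; nlinarith) hP' (by rw [hc, ← pow_mul, ← pow_succ']; exact hlt) ρ
      rwa [← pow_mul, ← pow_succ'] at this

theorem all_good_aux (H : Finset (ZMod p)) : ∑ ρ : ZMod p, #(((H ×ˢ H) ×ˢ (H ×ˢ H)).filter
    fun z => z.1.1 - ρ * z.1.2 = z.2.1 - ρ * z.2.2) ≤ p * #H ^ 2 + #H ^ 4 := by
  classical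
  have hz : ∀ z : (ZMod p × ZMod p) × (ZMod p × ZMod p),
      #(univ.filter fun ρ : ZMod p => z.1.1 - ρ * z.1.2 = z.2.1 - ρ * z.2.2) ≤
        (if z.1 = z.2 then p else 0) + 1 := by
    intro z
    by_cases hzz : z.1 = z.2
    · rw [if_pos hzz]
      refine (card_le_univ _).trans ?_
      rw [ZMod.card]; omega
    · rw [if_neg hzz, zero_add, card_le_one]
      intro a ha b hb
      simp only [mem_filter, mem_univ, true_and] at ha hb
      by_contra hab
      apply hzz
      have h1 : (a - b) * (z.1.2 - z.2.2) = 0 := by linear_combination hb - ha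
      have h2 : z.1.2 = z.2.2 := by
        rcases mul_eq_zero.1 h1 with h | h
        · exact absurd (sub_eq_zero.1 h) hab
        · exact sub_eq_zero.1 h
      rw [h2] at ha
      exact Prod.ext (by simpa using ha) h2
  have e1 : ∑ ρ : ZMod p, #(((H ×ˢ H) ×ˢ (H ×ˢ H)).filter
      fun z => z.1.1 - ρ * z.1.2 = z.2.1 - ρ * z.2.2) = ∑ z ∈ (H ×ˢ H) ×ˢ (H ×ˢ H),
      #(univ.filter fun ρ : ZMod p => z.1.1 - ρ * z.1.2 = z.2.1 - ρ * z.2.2) := by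
    have := sum_card_bipartiteAbove_eq_sum_card_bipartiteBelow (s := (univ : Finset (ZMod p)))
      (t := (H ×ˢ H) ×ˢ (H ×ˢ H)) (fun ρ z => z.1.1 - ρ * z.1.2 = z.2.1 - ρ * z.2.2)
    exact this
  rw [e1]
  refine (sum_le_sum fun z _ => hz z).trans ?_
  rw [sum_add_distrib, sum_const, card_product, card_product, ← sum_filter, sum_const]
  have : #(((H ×ˢ H) ×ˢ (H ×ˢ H)).filter fun z => z.1 = z.2) ≤ #H ^ 2 := by
    rw [sq, ← card_product]
    refine card_le_card_of_injOn (fun z => z.1) ?_ ?_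
    · intro z hz
      rw [mem_coe, mem_filter, mem_product] at hz
      exact hz.1.1
    · intro z hz z' hz' h
      rw [mem_coe, mem_filter] at hz hz'
      exact Prod.ext h (hz.2.symm.trans (h.trans hz'.2))
  rw [smul_eq_mul, smul_eq_mul]
  nlinarith [Nat.mul_le_mul_right p this]

theorem all_good_aux2 (H : Finset (ZMod p)) (ρ : ZMod p) (U : Finset (ZMod p)) :
    ∑ w ∈ U, #((H ×ˢ H).filter fun z => z.1 - ρ * z.2 = w) ^ 2 ≤
      #(((H ×ˢ H) ×ˢ (H ×ˢ H)).filter fun z => z.1.1 - ρ * z.1.2 = z.2.1 - ρ * z.2.2) := by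
  have hd : ∀ w, #((H ×ˢ H).filter fun z => z.1 - ρ * z.2 = w) ^ 2 ≤
      #((((H ×ˢ H) ×ˢ (H ×ˢ H)).filter fun z => z.1.1 - ρ * z.1.2 = z.2.1 - ρ * z.2.2).filter
        fun z => z.1.1 - ρ * z.1.2 = w) := by
    intro w
    rw [sq, ← card_product]
    apply card_le_card
    intro z hz
    rw [mem_product, mem_filter, mem_filter] at hz
    rw [mem_filter, mem_filter, mem_product]
    exact ⟨⟨⟨hz.1.1, hz.2.1⟩, hz.1.2.trans hz.2.2.symm⟩, hz.1.2⟩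
  refine (sum_le_sum fun w _ => hd w).trans ?_
  rw [sum_card_fiberwise_eq_card_filter]
  exact card_le_card (filter_subset _ _)

theorem all_good_low {L : ℝ} (hH : H.Nonempty) (ρ : ZMod p) (h : RS H L ρ) (e : ℝ)
    (he : (#(((H ×ˢ H) ×ˢ (H ×ˢ H)).filter
      fun z => z.1.1 - ρ * z.1.2 = z.2.1 - ρ * z.2.2) : ℝ) = e) :
    (#H : ℝ) ^ 3 ≤ L * e := by
  have hpos : (0 : ℝ) < #H := by exact_mod_cast hH.card_pos
  have hmaps : ∀ z ∈ H ×ˢ H, z.1 - ρ * z.2 ∈ H - ρ • H := by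
    intro z hz
    rw [mem_product] at hz
    exact sub_mem_sub hz.1 (smul_mem_smul_finset hz.2)
  have h1 := card_eq_sum_card_fiberwise hmaps
  have h2 := all_good_aux2 H ρ (H - ρ • H)
  rw [card_product] at h1
  have h2' := (Nat.cast_le (α := ℝ)).2 h2
  rw [he] at h2'
  have h1' := congrArg (Nat.cast (R := ℝ)) h1
  have h1'' : (#H : ℝ) ^ 2 = ∑ w ∈ H - ρ • H, (#((H ×ˢ H).filter fun z => z.1 - ρ * z.2 = w) : ℝ) := by
    rw [sq]; rw [Nat.cast_mul, Nat.cast_sum] at h1'; exact h1'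
  rw [Nat.cast_sum] at h2'
  have h3 := sq_sum_le_card_mul_sum_sq (s := H - ρ • H)
    (f := fun w => (#((H ×ˢ H).filter fun z => z.1 - ρ * z.2 = w) : ℝ))
  rw [← h1''] at h3
  have h2'' : ∑ w ∈ H - ρ • H, (#((H ×ˢ H).filter fun z => z.1 - ρ * z.2 = w) : ℝ) ^ 2 ≤ e := by
    refine le_trans (le_of_eq (sum_congr rfl fun w _ => ?_)) h2'
    rw [Nat.cast_pow]
  unfold RS at h
  have he0 : 0 ≤ e := he ▸ Nat.cast_nonneg _
  have h4 : ((#H : ℝ) ^ 2) ^ 2 ≤ L * #H * e :=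
    h3.trans (mul_le_mul h h2'' (sum_nonneg fun _ _ => sq_nonneg _) ((Nat.cast_nonneg _).trans h))
  have h5 : (#H : ℝ) ^ 3 * #H ≤ (L * e) * #H := by nlinarith
  exact le_of_mul_le_mul_right h5 hpos

/-- If every dilate is good then the set is tiny or huge. -/
theorem all_good (hH : H.Nonempty) {L : ℝ} (hall : ∀ ρ, RS H L ρ) :
    (#H : ℝ) * p ≤ L * (p + (#H : ℝ) ^ 2) := by
  classical
  have hpos : (0 : ℝ) < #H := by exact_mod_cast hH.card_pos
  have hLpos : 0 < L := by
    have := hall 0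
    unfold RS at this
    rw [zero_smul_finset hH] at this
    simp at this
    nlinarith
  have hup := (Nat.cast_le (α := ℝ)).2 (all_good_aux H)
  obtain ⟨e, he⟩ : ∃ e : ZMod p → ℝ, ∀ ρ, (#(((H ×ˢ H) ×ˢ (H ×ˢ H)).filter
      fun z => z.1.1 - ρ * z.1.2 = z.2.1 - ρ * z.2.2) : ℝ) = e ρ := ⟨_, fun _ => rfl⟩
  have hlow : ∀ ρ, (#H : ℝ) ^ 3 ≤ L * e ρ := fun ρ => all_good_low hH ρ (hall ρ) _ (he ρ)
  rw [Nat.cast_sum, sum_congr rfl fun ρ _ => he ρ] at hup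
  push_cast at hup
  have hs : (p : ℝ) * (#H : ℝ) ^ 3 ≤ L * ∑ ρ : ZMod p, e ρ := by
    rw [mul_sum]
    calc (p : ℝ) * (#H : ℝ) ^ 3 = ∑ ρ : ZMod p, (#H : ℝ) ^ 3 := by
          rw [sum_const, card_univ, ZMod.card, nsmul_eq_mul]
      _ ≤ _ := sum_le_sum fun ρ _ => hlow ρ
  have hs2 : (p : ℝ) * (#H : ℝ) ^ 3 ≤ L * (p * (#H : ℝ) ^ 2 + (#H : ℝ) ^ 4) := by
    refine hs.trans ?_
    gcongr
  have h6 : ((#H : ℝ) * p) * (#H : ℝ) ^ 2 ≤ (L * (p + (#H : ℝ) ^ 2)) * (#H : ℝ) ^ 2 := by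
    nlinarith
  exact le_of_mul_le_mul_right h6 (by positivity)
end


section
variable {G : Type*} [AddCommGroup G] [Fintype G] [DecidableEq G]

/-- correlation -/
def corr (f g : G → ℝ) (x : G) : ℝ := ∑ a, f a * g (a - x)

/-- squared norm of the correlation -/
def NN (f g : G → ℝ) : ℝ := ∑ x, corr f g x ^ 2

theorem NN_le1 (f g : G → ℝ) (hf : ∀ x, 0 ≤ f x) :
    NN f g ≤ (∑ x, f x) ^ 2 * ∑ x, g x ^ 2 := by
  unfold NN corr
  have h : ∀ x, (∑ a, f a * g (a - x)) ^ 2 ≤ (∑ a, f a) * ∑ a, f a * g (a - x) ^ 2 := by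
    intro x
    exact sum_sq_le_sum_mul_sum_of_sq_le_mul univ (fun a _ => hf a)
      (fun a _ => mul_nonneg (hf a) (sq_nonneg _)) (fun a _ => le_of_eq (by ring))
  refine (sum_le_sum fun x _ => h x).trans (le_of_eq ?_)
  rw [← mul_sum, sum_comm]
  have : ∀ a, ∑ x, f a * g (a - x) ^ 2 = f a * ∑ x, g x ^ 2 := by
    intro a
    rw [← mul_sum]
    congr 1
    exact Equiv.sum_comp (Equiv.subLeft a) (fun x => g x ^ 2)
  rw [sum_congr rfl fun a _ => this a, ← sum_mul]
  ring

theorem NN_le2 (f g : G → ℝ) (hg : ∀ x, 0 ≤ g x) :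
    NN f g ≤ (∑ x, f x ^ 2) * (∑ x, g x) ^ 2 := by
  unfold NN corr
  have hs : ∀ x, ∑ a, g (a - x) = ∑ a, g a := fun x =>
    Equiv.sum_comp (Equiv.subRight x) g
  have h : ∀ x, (∑ a, f a * g (a - x)) ^ 2 ≤ (∑ a, g a) * ∑ a, f a ^ 2 * g (a - x) := by
    intro x
    rw [← hs x]
    exact sum_sq_le_sum_mul_sum_of_sq_le_mul univ (fun a _ => hg _)
      (fun a _ => mul_nonneg (sq_nonneg _) (hg _)) (fun a _ => le_of_eq (by ring))
  refine (sum_le_sum fun x _ => h x).trans (le_of_eq ?_)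
  rw [← mul_sum, sum_comm]
  have : ∀ a, ∑ x, f a ^ 2 * g (a - x) = f a ^ 2 * ∑ x, g x := by
    intro a
    rw [← mul_sum]
    congr 1
    exact Equiv.sum_comp (Equiv.subLeft a) (fun x => g x)
  rw [sum_congr rfl fun a _ => this a, ← sum_mul]
  ring

theorem flat_energy (W : G → ℝ) (hW : ∀ x, 0 ≤ W x) (h1 : ∑ x, W x = 1) {Q K : ℝ}
    (hQ : 0 < Q) (h2 : ∑ x, W x ^ 2 ≤ Q) (hK : 1 ≤ K) (hN : Q / K ≤ NN W W)
    (E : Finset G) (hE : ∀ x, x ∈ E ↔ Q / (64 * K) ≤ W x ∧ W x ≤ 64 * K * Q) :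
    1 ≤ 8 * K * (64 * K) ^ 4 * Q ^ 3 * ∑ x : G, (#(E.filter fun a => a - x ∈ E) : ℝ) ^ 2 := by
  classical
  set M := 64 * K with hM
  have hMpos : 0 < M := by positivity
  set m : G → ℝ := fun x => if x ∈ E then W x else 0 with hm
  set l : G → ℝ := fun x => if W x < Q / M then W x else 0 with hl
  set h : G → ℝ := fun x => if W x < Q / M then 0 else if x ∈ E then 0 else W x with hh
  have hdec : ∀ x, W x = m x + l x + h x := by
    intro x
    simp only [hm, hl, hh]
    by_cases a : W x < Q / M
    · have : x ∉ E := fun hx => absurd ((hE x).1 hx).1 (not_le.2 a)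
      simp [a, this]
    · by_cases b : x ∈ E <;> simp [a, b]
  have hm0 : ∀ x, 0 ≤ m x := fun x => by simp only [hm]; split_ifs <;> simp [hW]
  have hl0 : ∀ x, 0 ≤ l x := fun x => by simp only [hl]; split_ifs <;> simp [hW]
  have hh0 : ∀ x, 0 ≤ h x := fun x => by simp only [hh]; split_ifs <;> simp [hW]
  have hmW : ∀ x, m x ≤ W x := fun x => by linarith [hdec x, hl0 x, hh0 x]
  have hm1 : ∑ x, m x ≤ 1 := h1 ▸ sum_le_sum fun x _ => hmW x
  have hm10 : 0 ≤ ∑ x, m x := sum_nonneg fun x _ => hm0 x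
  have hm2 : ∑ x, m x ^ 2 ≤ Q := (sum_le_sum fun x _ => by
    have := hmW x; have := hm0 x; gcongr).trans h2
  have hl2 : ∑ x, l x ^ 2 ≤ Q / M := by
    calc ∑ x, l x ^ 2 ≤ ∑ x, Q / M * W x := by
          refine sum_le_sum fun x _ => ?_
          simp only [hl]
          split_ifs with a
          · rw [sq]; exact mul_le_mul_of_nonneg_right a.le (hW x)
          · have := hW x; rw [zero_pow two_ne_zero]; positivity
      _ = _ := by rw [← mul_sum, h1, mul_one]
  have hh1 : ∑ x, h x ≤ 1 / M := by
    have : ∑ x, h x ≤ ∑ x, (M * Q)⁻¹ * W x ^ 2 := by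
      refine sum_le_sum fun x _ => ?_
      simp only [hh]
      split_ifs with a b
      · positivity
      · positivity
      · have hx : M * Q < W x := by
          by_contra hc
          exact b ((hE x).2 ⟨not_lt.1 a, not_lt.1 hc⟩)
        have hMQ : 0 < M * Q := by positivity
        rw [inv_mul_eq_div, le_div_iff₀ hMQ, sq]
        exact mul_le_mul_of_nonneg_left hx.le (hW x)
    refine this.trans ?_
    rw [← mul_sum, inv_mul_eq_div, div_le_div_iff₀ (by positivity) hMpos]
    nlinarith
  have hh10 : 0 ≤ ∑ x, h x := sum_nonneg fun x _ => hh0 x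
  have hM1 : 1 ≤ M := by rw [hM]; linarith
  have hQM : Q * (1 / M) ^ 2 ≤ Q / M := by
    rw [one_div, inv_pow, ← div_eq_mul_inv]
    gcongr
    nlinarith
  have n1 : NN m l ≤ Q / M := by
    refine (NN_le1 m l hm0).trans ?_
    calc (∑ x, m x) ^ 2 * ∑ x, l x ^ 2 ≤ 1 ^ 2 * (Q / M) := by gcongr
      _ = _ := by ring
  have n2 : NN l W ≤ Q / M := by
    refine (NN_le2 l W hW).trans ?_
    rw [h1]; linarith
  have n3 : NN m h ≤ Q / M := by
    refine (NN_le2 m h hh0).trans (le_trans ?_ hQM)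
    gcongr
  have n4 : NN h W ≤ Q / M := by
    refine (NN_le1 h W hh0).trans (le_trans ?_ hQM)
    rw [mul_comm]
    gcongr
  have hcorr : ∀ x, corr W W x = corr m m x + corr m l x + corr l W x + corr m h x + corr h W x := by
    intro x
    unfold corr
    rw [← sum_add_distrib, ← sum_add_distrib, ← sum_add_distrib, ← sum_add_distrib]
    refine sum_congr rfl fun a _ => ?_
    rw [hdec a, hdec (a - x)]
    ring
  have hsq : NN W W ≤ 5 * (NN m m + NN m l + NN l W + NN m h + NN h W) := by
    unfold NN
    rw [← sum_add_distrib, ← sum_add_distrib, ← sum_add_distrib, ← sum_add_distrib, mul_sum]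
    refine sum_le_sum fun x _ => ?_
    rw [hcorr x]
    generalize corr m m x = a
    generalize corr m l x = b
    generalize corr l W x = c
    generalize corr m h x = d
    generalize corr h W x = e
    nlinarith [sq_nonneg (a - b), sq_nonneg (a - c), sq_nonneg (a - d), sq_nonneg (a - e),
      sq_nonneg (b - c), sq_nonneg (b - d), sq_nonneg (b - e), sq_nonneg (c - d),
      sq_nonneg (c - e), sq_nonneg (d - e)]
  have hQM2 : Q / M = (Q / K) / 64 := by rw [hM]; field_simp
  have hmm : Q / (8 * K) ≤ NN m m := by
    have : Q / (8 * K) = (Q / K) / 8 := by field_simp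
    have hp : 0 < Q / K := by positivity
    linarith
  have hup : NN m m ≤ (M * Q) ^ 4 * ∑ x : G, (#(E.filter fun a => a - x ∈ E) : ℝ) ^ 2 := by
    unfold NN
    rw [mul_sum]
    refine sum_le_sum fun x _ => ?_
    have : corr m m x ≤ (M * Q) ^ 2 * (#(E.filter fun a => a - x ∈ E) : ℝ) := by
      unfold corr
      have : ((#(E.filter fun a => a - x ∈ E) : ℕ) : ℝ) = ∑ a : G, if a ∈ E ∧ a - x ∈ E then (1:ℝ) else 0 := by
        rw [card_eq_sum_ones, Nat.cast_sum, ← sum_filter]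
        refine sum_congr ?_ (by simp)
        ext a; simp
      rw [this, mul_sum]
      refine sum_le_sum fun a _ => ?_
      by_cases ha : a ∈ E
      · by_cases hb : a - x ∈ E
        · simp only [hm, ha, hb, if_true, and_self, mul_one]
          rw [sq]
          exact mul_le_mul ((hE _).1 ha).2 ((hE _).1 hb).2 (hW _) (by positivity)
        · simp [hm, hb]
      · simp [hm, ha]
    have h0 : 0 ≤ corr m m x := sum_nonneg fun a _ => mul_nonneg (hm0 _) (hm0 _)
    calc corr m m x ^ 2 ≤ ((M * Q) ^ 2 * (#(E.filter fun a => a - x ∈ E) : ℝ)) ^ 2 := by gcongr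
      _ = _ := by ring
  have hfin := hmm.trans hup
  generalize ∑ x : G, (#(E.filter fun a => a - x ∈ E) : ℝ) ^ 2 = En at hfin
  rw [div_le_iff₀ (by positivity)] at hfin
  have : Q * 1 ≤ Q * (8 * K * M ^ 4 * Q ^ 3 * En) := by nlinarith
  exact le_of_mul_le_mul_left this hQ

theorem energy_le (E : Finset G) :
    ∑ x : G, (#(E.filter fun a => a - x ∈ E) : ℝ) ^ 2 ≤ (#E : ℝ) ^ 3 := by
  have h1 : ∑ x : G, (#(E.filter fun a => a - x ∈ E)) = #E * #E := by
    have := sum_card_bipartiteAbove_eq_sum_card_bipartiteBelow (s := (univ : Finset G))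
      (t := E) (fun x a => a - x ∈ E)
    refine this.trans ?_
    rw [← smul_eq_mul, ← sum_const]
    refine sum_congr rfl fun a _ => ?_
    refine card_bij' (fun x _ => a - x) (fun y _ => a - y) ?_ ?_ ?_ ?_
    · intro x hx; exact (mem_bipartiteBelow _ |>.1 hx).2
    · intro y hy; rw [mem_bipartiteBelow]; simpa using hy
    · intro x _; simp
    · intro x _; simp
  have h1' : ∑ x : G, (#(E.filter fun a => a - x ∈ E) : ℝ) = #E * #E := by exact_mod_cast h1
  calc ∑ x : G, (#(E.filter fun a => a - x ∈ E) : ℝ) ^ 2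
      ≤ ∑ x : G, (#E : ℝ) * (#(E.filter fun a => a - x ∈ E) : ℝ) := by
        refine sum_le_sum fun x _ => ?_
        rw [sq]
        gcongr
        exact filter_subset _ _
    _ = _ := by rw [← mul_sum, h1']; ring

set_option maxHeartbeats 800000 in
theorem flat_struct (W : G → ℝ) (hW : ∀ x, 0 ≤ W x) (h1 : ∑ x, W x = 1) {Q K : ℝ}
    (hQ : 0 < Q) (h2 : ∑ x, W x ^ 2 ≤ Q) (hK : 2 ^ 9 ≤ K) (hN : Q / K ≤ NN W W) :
    ∃ H : Finset G, H.Nonempty ∧ (#(H - H) : ℝ) ≤ K ^ 54 * #H ∧ 1 ≤ K ^ 19 * ∑ x ∈ H, W x ∧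
      1 ≤ K ^ 17 * (#H * Q) ∧ #H * Q ≤ K ^ 2 := by
  classical
  set E : Finset G := univ.filter fun x => Q / (64 * K) ≤ W x ∧ W x ≤ 64 * K * Q with hEd
  have hE : ∀ x, x ∈ E ↔ Q / (64 * K) ≤ W x ∧ W x ≤ 64 * K * Q := by intro x; simp [hEd]
  have hK1 : 1 ≤ K := by linarith
  have hK0 : 0 < K := by linarith
  have hen := flat_energy W hW h1 hQ h2 hK1 hN E hE
  have hen2 := energy_le E
  have hEc : (#E : ℝ) * Q ≤ 64 * K := by
    have : (#E : ℝ) * (Q / (64 * K)) ≤ 1 := by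
      rw [← nsmul_eq_mul, ← sum_const, ← h1]
      refine (sum_le_sum fun x hx => ((hE x).1 hx).1).trans ?_
      exact sum_le_univ_sum_of_nonneg hW
    rw [mul_div_assoc', div_le_one (by positivity)] at this
    exact this
  set En := ∑ x : G, (#(E.filter fun a => a - x ∈ E) : ℝ) ^ 2 with hEn
  have hEn0 : 0 ≤ En := sum_nonneg fun _ _ => sq_nonneg _
  set N : ℝ := (#E : ℝ) with hNd
  have hN0 : 0 ≤ N := by positivity
  have hpow : ∀ (c : ℝ) (j : ℕ), c ≤ (2 ^ 9) ^ j → c ≤ K ^ j := fun c j h =>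
    h.trans (by gcongr)
  have hb : N ^ 3 ≤ K ^ 13 * En := by
    have a1 : (N * Q) ^ 3 ≤ (64 * K) ^ 3 := by gcongr
    have a2 : (N * Q) ^ 3 ≤ (64 * K) ^ 3 * (8 * K * (64 * K) ^ 4 * Q ^ 3 * En) := by
      refine a1.trans ?_
      exact le_mul_of_one_le_right (by positivity) hen
    have a3 : N ^ 3 * Q ^ 3 ≤ (2 ^ 45 * K ^ 8 * En) * Q ^ 3 := by
      refine le_trans (le_of_eq (by ring)) (a2.trans (le_of_eq (by ring)))
    have a4 := le_of_mul_le_mul_right a3 (by positivity)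
    refine a4.trans ?_
    have := hpow (2 ^ 45) 5 (by norm_num)
    calc (2 ^ 45 * K ^ 8 * En) ≤ K ^ 5 * K ^ 8 * En :=
          mul_le_mul_of_nonneg_right (mul_le_mul_of_nonneg_right this (by positivity)) hEn0
      _ = _ := by ring
  have hNQ : 1 ≤ K ^ 3 * (N * Q) := by
    have a1 : 1 ≤ 8 * K * (64 * K) ^ 4 * Q ^ 3 * N ^ 3 := by
      refine hen.trans ?_
      gcongr
    have := hpow (2 ^ 27) 4 (by norm_num)
    have a2 : 1 ≤ (K ^ 3 * (N * Q)) ^ 3 := by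
      calc 1 ≤ 8 * K * (64 * K) ^ 4 * Q ^ 3 * N ^ 3 := a1
        _ = 2 ^ 27 * K ^ 5 * (N * Q) ^ 3 := by ring
        _ ≤ K ^ 4 * K ^ 5 * (N * Q) ^ 3 :=
          mul_le_mul_of_nonneg_right (mul_le_mul_of_nonneg_right this (by positivity)) (by positivity)
        _ = _ := by ring
    by_contra hc
    have := pow_lt_one₀ (n := 3) (by positivity) (not_le.1 hc) (by norm_num)
    linarith
  have hEne : E.Nonempty := by
    rw [nonempty_iff_ne_empty]
    intro he
    rw [hNd, he] at hNQ
    norm_num at hNQ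
  obtain ⟨H, hHE, hH1, hH2⟩ := bsg E (K ^ 13) (one_le_pow₀ hK1) hEne hb
  have hNpos : 0 < N := by
    rw [hNd]; exact_mod_cast hEne.card_pos
  have hHpos : (0 : ℝ) < #H := by
    rcases (Nat.cast_nonneg (α := ℝ) (#H)).eq_or_lt with h | h
    · rw [← h] at hH1; rw [← hNd] at hH1; linarith
    · exact h
  have hHQ : 1 ≤ K ^ 17 * (#H * Q) := by
    calc 1 ≤ K ^ 3 * (N * Q) := hNQ
      _ ≤ K ^ 3 * ((8 * K ^ 13 * #H) * Q) := by gcongr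
      _ = 8 * K ^ 16 * (#H * Q) := by ring
      _ ≤ K ^ 1 * K ^ 16 * (#H * Q) := by
        have := hpow 8 1 (by norm_num)
        gcongr
      _ = _ := by ring
  refine ⟨H, card_pos.1 (by exact_mod_cast hHpos), ?_, ?_, hHQ, ?_⟩
  · calc (#(H - H) : ℝ) ≤ 8192 * (K ^ 13) ^ 3 * N := hH2
      _ ≤ 8192 * (K ^ 13) ^ 3 * (8 * K ^ 13 * #H) := by gcongr
      _ = 2 ^ 16 * K ^ 52 * #H := by ring
      _ ≤ K ^ 2 * K ^ 52 * #H := by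
        have := hpow (2 ^ 16) 2 (by norm_num)
        exact mul_le_mul_of_nonneg_right (mul_le_mul_of_nonneg_right this (by positivity))
          (by positivity)
      _ = _ := by ring
  · have hs : #H * (Q / (64 * K)) ≤ ∑ x ∈ H, W x := by
      rw [← nsmul_eq_mul, ← sum_const]
      exact sum_le_sum fun x hx => ((hE x).1 (hHE hx)).1
    calc 1 ≤ K ^ 17 * (#H * Q) := hHQ
      _ = 64 * K ^ 18 * (#H * (Q / (64 * K))) := by field_simp
      _ ≤ K ^ 1 * K ^ 18 * (∑ x ∈ H, W x) := by
        have := hpow 64 1 (by norm_num)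
        gcongr
      _ = _ := by ring
  · calc (#H : ℝ) * Q ≤ N * Q := by
          have : (#H : ℝ) ≤ N := by rw [hNd]; exact_mod_cast card_le_card hHE
          gcongr
      _ ≤ 64 * K := hEc
      _ ≤ K * K := by nlinarith
      _ = _ := by ring
end


section
variable {p : ℕ} [hp : Fact p.Prime]

/-- law of the product of independent variables with laws σ and ν -/
def dil (σ ν : ZMod p → ℝ) (x : ZMod p) : ℝ := ∑ y, σ y * ν (y⁻¹ * x)

theorem sum_mul_inv_comp (f : ZMod p → ℝ) {y : ZMod p} (hy : y ≠ 0) :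
    ∑ x, f (y⁻¹ * x) = ∑ x, f x :=
  Equiv.sum_comp (Equiv.mulLeft₀ y⁻¹ (inv_ne_zero hy)) f

theorem dil_nonneg {σ ν : ZMod p → ℝ} (hσ : ∀ x, 0 ≤ σ x) (hν : ∀ x, 0 ≤ ν x) (x) :
    0 ≤ dil σ ν x := sum_nonneg fun y _ => mul_nonneg (hσ y) (hν _)

theorem dil_pair {σ ν : ZMod p → ℝ} (h0 : σ 0 = 0) (g : ZMod p → ℝ) :
    ∑ x, dil σ ν x * g x = ∑ x, ν x * ∑ y, σ y * g (y * x) := by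
  unfold dil
  simp only [sum_mul, mul_sum]
  rw [sum_comm, sum_comm (s := univ) (t := univ) (f := fun x y => ν x * (σ y * g (y * x)))]
  refine sum_congr rfl fun y _ => ?_
  by_cases hy : y = 0
  · simp [hy, h0]
  rw [← sum_mul_inv_comp (fun x => ν x * (σ y * g (y * x))) hy]
  refine sum_congr rfl fun x _ => ?_
  rw [mul_inv_cancel_left₀ hy]; ring

theorem dil_sum {σ ν : ZMod p → ℝ} (h0 : σ 0 = 0) (hσ1 : ∑ x, σ x = 1) (hν1 : ∑ x, ν x = 1) :
    ∑ x, dil σ ν x = 1 := by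
  have := dil_pair (ν := ν) h0 (fun _ => 1)
  simpa [hσ1, hν1] using this

theorem dil_sq {σ ν : ZMod p → ℝ} (h0 : σ 0 = 0) (hσ : ∀ x, 0 ≤ σ x) (hσ1 : ∑ x, σ x = 1) :
    ∑ x, dil σ ν x ^ 2 ≤ ∑ x, ν x ^ 2 := by
  have h : ∀ x, dil σ ν x ^ 2 ≤ ∑ y, σ y * ν (y⁻¹ * x) ^ 2 := by
    intro x
    have := sum_sq_le_sum_mul_sum_of_sq_le_mul (univ : Finset (ZMod p))
      (r := fun y => σ y * ν (y⁻¹ * x)) (f := σ) (g := fun y => σ y * ν (y⁻¹ * x) ^ 2)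
      (fun a _ => hσ a) (fun a _ => mul_nonneg (hσ a) (sq_nonneg _)) (fun a _ => le_of_eq (by ring))
    rw [hσ1, one_mul] at this
    exact this
  refine (sum_le_sum fun x _ => h x).trans (le_of_eq ?_)
  have := dil_pair (ν := fun x => ν x ^ 2) h0 (fun _ => 1)
  simpa [dil, hσ1] using this

theorem rs_of_common {H I : Finset (ZMod p)} {y y' : ZMod p} (hy : y ≠ 0) (hy' : y' ≠ 0)
    (h1 : ∀ x ∈ I, y * x ∈ H) (h2 : ∀ x ∈ I, y' * x ∈ H) {A B : ℝ} (hA : 0 ≤ A)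
    (hHH : (#(H - H) : ℝ) ≤ A * #H) (hHI : (#H : ℝ) ≤ B * #I) (hI : 0 < #I) :
    RS H (A ^ 2 * B) (y / y') := by
  unfold RS
  set ρ := y / y' with hρ
  have hρ0 : ρ ≠ 0 := div_ne_zero hy hy'
  have hJ1 : y • I ⊆ H := by
    intro z hz; obtain ⟨x, hx, rfl⟩ := mem_smul_finset.1 hz
    exact h1 x hx
  have hJ2 : y • I ⊆ ρ • H := by
    intro z hz; obtain ⟨x, hx, rfl⟩ := mem_smul_finset.1 hz
    refine mem_smul_finset.2 ⟨y' * x, h2 x hx, ?_⟩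
    rw [hρ, smul_eq_mul, smul_eq_mul, ← mul_assoc, div_mul_cancel₀ _ hy']
  have hr := ruzsa_triangle_inequality_sub_sub_sub H (y • I) (ρ • H)
  have hc : #(y • I) = #I := card_smul_finset₀ hy I
  have hb1 : #(H - y • I) ≤ #(H - H) := card_le_card (sub_subset_sub_left hJ1)
  have hb2 : #(ρ • H - y • I) ≤ #(H - H) := by
    refine (card_le_card (sub_subset_sub_left hJ2)).trans (le_of_eq ?_)
    rw [← smul_sub_aux, card_smul_aux hρ0]
  rw [hc] at hr
  have hr2 : #(H - ρ • H) * #I ≤ #(H - H) * #(H - H) := hr.trans (Nat.mul_le_mul hb1 hb2)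
  have hr3 : (#(H - ρ • H) : ℝ) * #I ≤ #(H - H) * #(H - H) := by exact_mod_cast hr2
  have hIpos : (0 : ℝ) < #I := by exact_mod_cast hI
  have : (#(H - ρ • H) : ℝ) * #I ≤ (A ^ 2 * B * #H) * #I := by
    calc (#(H - ρ • H) : ℝ) * #I ≤ #(H - H) * #(H - H) := hr3
      _ ≤ (A * #H) * (A * #H) := by gcongr
      _ = A ^ 2 * #H * #H := by ring
      _ ≤ A ^ 2 * #H * (B * #I) := by gcongr
      _ = _ := by ring
  exact le_of_mul_le_mul_right this hIpos

theorem exists_pop {σ ν : ZMod p → ℝ} (hσ : ∀ x, 0 ≤ σ x) (hν : ∀ x, 0 ≤ ν x)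
    (hσ1 : ∑ x, σ x = 1) (hν1 : ∑ x, ν x = 1) (h0 : σ 0 = 0) (H : Finset (ZMod p)) {w : ℝ}
    (hw0 : 0 ≤ w) (hw : w ≤ ∑ x ∈ H, dil σ ν x) :
    ∃ y', y' ≠ 0 ∧ w ^ 2 ≤ ∑ y, σ y * ∑ x ∈ univ.filter (fun x => y * x ∈ H ∧ y' * x ∈ H), ν x := by
  classical
  set i : ZMod p → ℝ := fun x => if x ∈ H then 1 else 0 with hi
  have e1 : ∑ x ∈ H, dil σ ν x = ∑ x, ν x * ∑ y, σ y * i (y * x) := by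
    rw [← dil_pair h0]
    simp [hi]
  have e2 : (∑ x, ν x * ∑ y, σ y * i (y * x)) ^ 2 ≤ ∑ x, ν x * (∑ y, σ y * i (y * x)) ^ 2 := by
    have := sum_sq_le_sum_mul_sum_of_sq_le_mul (univ : Finset (ZMod p))
      (r := fun x => ν x * ∑ y, σ y * i (y * x)) (f := ν)
      (g := fun x => ν x * (∑ y, σ y * i (y * x)) ^ 2)
      (fun a _ => hν a) (fun a _ => mul_nonneg (hν a) (sq_nonneg _)) (fun a _ => le_of_eq (by ring))
    rw [hν1, one_mul] at this
    exact this
  set g : ZMod p → ℝ := fun y' => ∑ y, σ y * ∑ x ∈ univ.filter (fun x => y * x ∈ H ∧ y' * x ∈ H), ν x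
    with hg
  have e3 : ∑ x, ν x * (∑ y, σ y * i (y * x)) ^ 2 = ∑ y', σ y' * g y' := by
    have : ∀ y y', ∑ x ∈ univ.filter (fun x => y * x ∈ H ∧ y' * x ∈ H), ν x =
        ∑ x, ν x * (i (y * x) * i (y' * x)) := by
      intro y y'
      rw [sum_filter]
      refine sum_congr rfl fun x _ => ?_
      by_cases a : y * x ∈ H <;> by_cases b : y' * x ∈ H <;> simp [hi, a, b]
    simp only [hg, this, sq, mul_sum, sum_mul]
    rw [sum_comm]
    refine sum_congr rfl fun y' _ => ?_
    rw [sum_comm]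
    refine sum_congr rfl fun y _ => ?_
    refine sum_congr rfl fun x _ => ?_
    ring
  have e4 : w ^ 2 ≤ ∑ y', σ y' * g y' := by
    rw [← e3]; refine le_trans ?_ e2; rw [← e1]; gcongr
  by_contra hc
  push Not at hc
  have hlt : ∑ y', σ y' * g y' < ∑ y', σ y' * w ^ 2 := by
    apply sum_lt_sum
    · intro y' _
      by_cases hy : y' = 0
      · simp [hy, h0]
      · exact mul_le_mul_of_nonneg_left (hc y' hy).le (hσ y')
    · obtain ⟨y, _, hy⟩ : ∃ y ∈ (univ : Finset (ZMod p)), 0 < σ y := by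
        by_contra hn
        push Not at hn
        have := sum_nonpos hn
        linarith
      have hy0 : y ≠ 0 := by rintro rfl; linarith
      exact ⟨y, mem_univ _, mul_lt_mul_of_pos_left (hc y hy0) hy⟩
  rw [← sum_mul, hσ1, one_mul] at hlt
  linarith

theorem flat_core {σ ν : ZMod p → ℝ} (hσ : ∀ x, 0 ≤ σ x) (hν : ∀ x, 0 ≤ ν x)
    (hσ1 : ∑ x, σ x = 1) (hν1 : ∑ x, ν x = 1) (h0 : σ 0 = 0) {Q K s : ℝ} (hs : ∀ y, σ y ≤ s)
    (hQ : 0 < Q) (hνQ : ∑ x, ν x ^ 2 ≤ Q) (hK : 2 ^ 9 ≤ K)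
    (hN : Q / K ≤ NN (dil σ ν) (dil σ ν)) :
    ∃ H : Finset (ZMod p), H.Nonempty ∧ (#(H - H) : ℝ) ≤ K ^ 54 * #H ∧
      1 ≤ K ^ 17 * (#H * Q) ∧ #H * Q ≤ K ^ 2 ∧
      ∃ P : Finset (ZMod p), 1 ≤ s * K ^ 39 * #P ∧ ∀ x ∈ P, RS H (K ^ 187) x := by
  classical
  obtain ⟨H, hH, hHH, hHW, hHQ, hHQ'⟩ := flat_struct (dil σ ν) (dil_nonneg hσ hν)
    (dil_sum h0 hσ1 hν1) hQ ((dil_sq h0 hσ hσ1).trans hνQ) hK hN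
  refine ⟨H, hH, hHH, hHQ, hHQ', ?_⟩
  have hK0 : 0 < K := lt_of_lt_of_le (by norm_num) hK
  have hK4 : 4 ≤ K := le_trans (by norm_num) hK
  have hw : (K ^ 19)⁻¹ ≤ ∑ x ∈ H, dil σ ν x := by
    rwa [inv_le_iff_one_le_mul₀' (by positivity)]
  obtain ⟨y', hy', hsum⟩ := exists_pop hσ hν hσ1 hν1 h0 H (by positivity) hw
  set t : ZMod p → ℝ := fun y => ∑ x ∈ univ.filter (fun x => y * x ∈ H ∧ y' * x ∈ H), ν x with ht
  set v : ℝ := ((K ^ 19)⁻¹) ^ 2 with hv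
  have hvpos : 0 < v := by positivity
  have hvK : v * K ^ 38 = 1 := by rw [hv]; field_simp
  have ht1 : ∀ y, t y ≤ 1 := fun y => by
    rw [← hν1]; exact sum_le_univ_sum_of_nonneg hν
  set Y : Finset (ZMod p) := univ.filter fun y => y ≠ 0 ∧ v / 2 ≤ t y with hY
  have hs0 : 0 ≤ s := (hσ 0).trans (hs 0)
  have hYs : v / 2 ≤ #Y * s := by
    have h1 : ∑ y, σ y * t y ≤ ∑ y, ((if y ∈ Y then s else 0) + σ y * (v / 2)) := by
      refine sum_le_sum fun y _ => ?_
      by_cases hy : y ∈ Y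
      · rw [if_pos hy]
        have := mul_le_mul_of_nonneg_left (ht1 y) (hσ y)
        have := hs y
        have := mul_nonneg (hσ y) hvpos.le
        linarith
      · rw [if_neg hy, zero_add]
        by_cases hy0 : y = 0
        · simp [hy0, h0]
        · refine mul_le_mul_of_nonneg_left ?_ (hσ y)
          by_contra hcc
          exact hy (by simp only [hY, mem_filter, mem_univ, true_and]; exact ⟨hy0, (not_le.1 hcc).le⟩)
    rw [sum_add_distrib, ← sum_mul, hσ1, one_mul, sum_ite_mem, univ_inter, sum_const,
      nsmul_eq_mul] at h1
    have := hsum.trans h1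
    linarith
  refine ⟨Y.image (fun y => y / y'), ?_, ?_⟩
  · rw [card_image_of_injective _ (fun a b h => (div_left_inj' hy').1 h)]
    calc (1 : ℝ) = (v / 2) * (2 * K ^ 38) := by linarith
      _ ≤ (#Y * s) * (K * K ^ 38) := by
        gcongr
        linarith
      _ = _ := by ring
  · intro x hx
    obtain ⟨y, hyY, rfl⟩ := mem_image.1 hx
    simp only [hY, mem_filter, mem_univ, true_and] at hyY
    set I := univ.filter (fun x => y * x ∈ H ∧ y' * x ∈ H) with hI
    have hIQ : (v / 2) ^ 2 ≤ #I * Q := by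
      calc (v / 2) ^ 2 ≤ (t y) ^ 2 := by gcongr; exact hyY.2
        _ ≤ #I * ∑ x ∈ I, ν x ^ 2 := sq_sum_le_card_mul_sum_sq
        _ ≤ #I * Q := by
          gcongr
          refine le_trans ?_ hνQ
          exact sum_le_univ_sum_of_nonneg fun x => sq_nonneg _
    have hIpos : 0 < #I := by
      by_contra hcc
      have : #I = 0 := by omega
      rw [this] at hIQ
      have : 0 < (v / 2) ^ 2 := by positivity
      norm_num at hIQ
      linarith
    have hHI : (#H : ℝ) ≤ K ^ 79 * #I := by
      have hIQ' : 1 ≤ 4 * K ^ 76 * (#I * Q) := by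
        calc (1 : ℝ) = 4 * K ^ 76 * (v / 2) ^ 2 := by
              have : (v * K ^ 38) ^ 2 = 1 := by rw [hvK]; ring
              linarith
          _ ≤ _ := by gcongr
      calc (#H : ℝ) ≤ #H * (4 * K ^ 76 * (#I * Q)) := le_mul_of_one_le_right (by positivity) hIQ'
        _ = 4 * K ^ 76 * #I * (#H * Q) := by ring
        _ ≤ 4 * K ^ 76 * #I * K ^ 2 := mul_le_mul_of_nonneg_left hHQ' (by positivity)
        _ ≤ K * K ^ 76 * #I * K ^ 2 := by gcongr
        _ = _ := by ring
    have := rs_of_common (I := I) hyY.1 hy' (fun x hx => (mem_filter.1 hx).2.1)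
      (fun x hx => (mem_filter.1 hx).2.2) (by positivity) hHH hHI hIpos
    rwa [← pow_mul, ← pow_add] at this

theorem flat_main (ε : ℝ) (hε : 0 < ε) : ∃ c : ℝ, 0 < c ∧ ∃ p0 : ℕ, ∀ (p : ℕ) [Fact p.Prime],
    p0 ≤ p → ∀ (σ ν : ZMod p → ℝ), (∀ x, 0 ≤ σ x) → (∀ x, 0 ≤ ν x) → ∑ x, σ x = 1 →
      ∑ x, ν x = 1 → σ 0 = 0 → (∀ y, σ y ≤ (p : ℝ) ^ (-ε)) → ∀ Q : ℝ, ∑ x, ν x ^ 2 ≤ Q →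
      (p : ℝ) ^ (-(3 / 4) : ℝ) < Q → Q ≤ (p : ℝ) ^ (-ε) →
      NN (dil σ ν) (dil σ ν) ≤ (p : ℝ) ^ (-c) * Q := by
  obtain ⟨m, hm⟩ : ∃ m : ℕ, 4 / ε < 2 ^ m := pow_unbounded_of_one_lt _ (by norm_num)
  set D : ℕ := 187 * 735 ^ m with hD
  set c : ℝ := min ε (1 / 4) / (D + 100) with hc
  have hmin : 0 < min ε (1 / 4) := lt_min hε (by norm_num)
  have hcpos : 0 < c := by positivity
  have hcD : c * (D + 100) = min ε (1 / 4) := by rw [hc]; field_simp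
  have hD0 : (187 : ℝ) ≤ D := by
    have : 187 ≤ D := by rw [hD]; exact Nat.le_mul_of_pos_right _ (by positivity)
    exact_mod_cast this
  obtain ⟨p0, hp0⟩ := Filter.eventually_atTop.1
    (((tendsto_rpow_atTop hcpos).comp tendsto_natCast_atTop_atTop).eventually_ge_atTop
      ((2 : ℝ) ^ 9))
  refine ⟨c, hcpos, p0, ?_⟩
  intro p hp hpp σ ν hσ hν hσ1 hν1 h0 hs Q hνQ hQ1 hQ2
  have hK := hp0 p hpp
  simp only [Function.comp] at hK
  by_contra hcon
  push Not at hcon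
  have hp1 : (1 : ℝ) < p := by exact_mod_cast hp.out.one_lt
  have hp0' : (0 : ℝ) < p := by linarith
  have hQ : 0 < Q := lt_trans (by positivity) hQ1
  set K : ℝ := (p : ℝ) ^ c with hKd
  have hK0 : 0 < K := by positivity
  have hK2 : 2 ≤ K := le_trans (by norm_num) hK
  have hKpow : ∀ j : ℕ, K ^ j = (p : ℝ) ^ (c * j) := fun j => by
    rw [hKd, ← Real.rpow_natCast, ← Real.rpow_mul hp0'.le]
  have hN : Q / K ≤ NN (dil σ ν) (dil σ ν) := by
    rw [Real.rpow_neg hp0'.le] at hcon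
    rw [div_eq_inv_mul]; exact hcon.le
  obtain ⟨H, hH, hHH, hHQ, hHQ', P, hP, hPR⟩ := flat_core hσ hν hσ1 hν1 h0 hs hQ hνQ hK hN
  have hPbig : (p : ℝ) ^ (ε / 2) ≤ #P := by
    have h1 : K ^ 39 ≤ (p : ℝ) ^ (ε / 2) := by
      rw [hKpow]
      apply Real.rpow_le_rpow_of_exponent_le hp1.le
      have := min_le_left ε (1 / 4)
      push_cast
      nlinarith
    have h2 : (p : ℝ) ^ ε = (p : ℝ) ^ (ε / 2) * (p : ℝ) ^ (ε / 2) := by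
      rw [← Real.rpow_add hp0']; congr 1; ring
    have h3 : (p : ℝ) ^ ε ≤ K ^ 39 * #P := by
      rw [Real.rpow_neg hp0'.le, mul_assoc, ← div_eq_inv_mul, one_le_div (by positivity)] at hP
      exact hP
    have h4 : (p : ℝ) ^ (ε / 2) * (p : ℝ) ^ (ε / 2) ≤ (p : ℝ) ^ (ε / 2) * #P := by
      rw [← h2]; refine h3.trans ?_; gcongr
    exact le_of_mul_le_mul_left h4 (by positivity)
  have hP2 : 2 ≤ #P := by
    have : (1 : ℝ) < #P := lt_of_lt_of_le (Real.one_lt_rpow hp1 (by positivity)) hPbig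
    have : 1 < #P := by exact_mod_cast this
    omega
  have hPp : p < #P ^ (2 ^ m) := by
    have : (p : ℝ) < (#P : ℝ) ^ (2 ^ m) := by
      calc (p : ℝ) = (p : ℝ) ^ (1 : ℝ) := by rw [Real.rpow_one]
        _ < (p : ℝ) ^ ((ε / 2) * ((2 ^ m : ℕ) : ℝ)) := by
          apply Real.rpow_lt_rpow_of_exponent_lt hp1
          rw [div_lt_iff₀ hε] at hm
          push_cast
          linarith
        _ = ((p : ℝ) ^ (ε / 2)) ^ (2 ^ m) := by
          rw [Real.rpow_mul hp0'.le, Real.rpow_natCast]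
        _ ≤ _ := by gcongr
    exact_mod_cast this
  have hall := gk_iter hH hHH (one_le_pow₀ (by linarith)) m (K ^ 187)
    (pow_le_pow_right₀ (by linarith) (by norm_num)) P hP2 hPR hPp
  have hag := all_good hH hall
  rw [← pow_mul, ← hD] at hag
  set h : ℝ := (#H : ℝ) with hh
  have hhpos : 0 < h := by rw [hh]; exact_mod_cast hH.card_pos
  have hmin1 := min_le_left ε (1 / 4)
  have hmin2 := min_le_right ε (1 / 4)
  rcases le_total (h ^ 2) p with hcase | hcase
  · have h1 : h * p ≤ (2 * K ^ D) * p := by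
      calc h * p ≤ K ^ D * (p + h ^ 2) := hag
        _ ≤ K ^ D * (p + p) := by gcongr
        _ = _ := by ring
    have h2 : h ≤ K * K ^ D := (le_of_mul_le_mul_right h1 hp0').trans (by gcongr)
    have h3 : (p : ℝ) ^ ε ≤ K ^ (D + 18) := by
      have : 1 ≤ K ^ 17 * (h * (p : ℝ) ^ (-ε)) := hHQ.trans (by gcongr)
      rw [Real.rpow_neg hp0'.le, ← mul_assoc, ← div_eq_mul_inv, one_le_div (by positivity)] at this
      calc (p : ℝ) ^ ε ≤ K ^ 17 * h := this
        _ ≤ K ^ 17 * (K * K ^ D) := by gcongr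
        _ = _ := by ring
    rw [hKpow, Real.rpow_le_rpow_left_iff hp1] at h3
    push_cast at h3
    nlinarith
  · have h1 : h * p ≤ h * (2 * K ^ D * h) := by
      calc h * p ≤ K ^ D * (p + h ^ 2) := hag
        _ ≤ K ^ D * (h ^ 2 + h ^ 2) := by gcongr
        _ = _ := by ring
    have h2 : (p : ℝ) ≤ 2 * K ^ D * h := le_of_mul_le_mul_left h1 hhpos
    have h3 : h ≤ K ^ 2 * (p : ℝ) ^ (3 / 4 : ℝ) := by
      have : h * (p : ℝ) ^ (-(3 / 4) : ℝ) ≤ K ^ 2 := le_trans (by gcongr) hHQ'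
      rwa [Real.rpow_neg hp0'.le, ← div_eq_mul_inv, div_le_iff₀ (by positivity)] at this
    have h4 : (p : ℝ) ^ (1 / 4 : ℝ) * (p : ℝ) ^ (3 / 4 : ℝ) ≤ K ^ (D + 3) * (p : ℝ) ^ (3 / 4 : ℝ) := by
      rw [← Real.rpow_add hp0']
      norm_num
      calc (p : ℝ) ≤ 2 * K ^ D * h := h2
        _ ≤ K * K ^ D * (K ^ 2 * (p : ℝ) ^ (3 / 4 : ℝ)) := by gcongr
        _ = _ := by ring
    have h5 := le_of_mul_le_mul_right h4 (by positivity)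
    rw [hKpow, Real.rpow_le_rpow_left_iff hp1] at h5
    push_cast at h5
    nlinarith

end


section
variable {p : ℕ} [hp : Fact p.Prime]

/-- standard additive character -/
noncomputable def ee (x : ZMod p) : ℂ := ZMod.stdAddChar x

theorem ee_add (x y : ZMod p) : ee (x + y) = ee x * ee y := by
  unfold ee; exact AddChar.map_add_eq_mul _ _ _

theorem ee_zero : ee (0 : ZMod p) = 1 := by unfold ee; exact AddChar.map_zero_eq_one _

theorem ee_norm (x : ZMod p) : ‖ee x‖ = 1 := by unfold ee; exact AddChar.norm_apply _ _

theorem ee_neg (x : ZMod p) : ee (-x) = starRingEnd ℂ (ee x) := by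
  unfold ee; exact AddChar.map_neg_eq_conj _ _

theorem ee_orth (a : ZMod p) : ∑ ξ : ZMod p, ee (ξ * a) = if a = 0 then (p : ℂ) else 0 := by
  have := AddChar.sum_mulShift (R := ZMod p) (R' := ℂ) (ψ := ZMod.stdAddChar) a
    (ZMod.isPrimitive_stdAddChar p)
  rw [ZMod.card] at this
  unfold ee
  convert this using 1
  split_ifs <;> simp

/-- Fourier transform -/
noncomputable def ft (f : ZMod p → ℂ) (ξ : ZMod p) : ℂ := ∑ x, f x * ee (ξ * x)

theorem parseval (f : ZMod p → ℂ) : ∑ ξ, ‖ft f ξ‖ ^ 2 = p * ∑ x, ‖f x‖ ^ 2 := by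
  have hc : ∀ z : ℂ, ((‖z‖ ^ 2 : ℝ) : ℂ) = z * starRingEnd ℂ z := fun z => by
    rw [Complex.mul_conj, Complex.normSq_eq_norm_sq]
  have : ((∑ ξ, ‖ft f ξ‖ ^ 2 : ℝ) : ℂ) = ((p * ∑ x, ‖f x‖ ^ 2 : ℝ) : ℂ) := by
    rw [Complex.ofReal_sum, Complex.ofReal_mul, Complex.ofReal_sum]
    simp only [hc]
    unfold ft
    simp only [map_sum, map_mul, sum_mul_sum]
    calc ∑ ξ : ZMod p, ∑ x, ∑ y, f x * ee (ξ * x) * (starRingEnd ℂ (f y) * starRingEnd ℂ (ee (ξ * y)))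
        = ∑ x, ∑ y, f x * starRingEnd ℂ (f y) * ∑ ξ : ZMod p, ee (ξ * (x - y)) := by
          rw [sum_comm]
          refine sum_congr rfl fun x _ => ?_
          rw [sum_comm]
          refine sum_congr rfl fun y _ => ?_
          rw [mul_sum]
          refine sum_congr rfl fun ξ _ => ?_
          rw [← ee_neg, mul_sub, sub_eq_add_neg, ee_add]
          ring
      _ = ∑ x, f x * starRingEnd ℂ (f x) * p := by
          refine sum_congr rfl fun x _ => ?_
          simp only [ee_orth, sub_eq_zero, mul_ite, mul_zero]
          simp
      _ = _ := by rw [mul_sum]; refine sum_congr rfl fun x _ => ?_; rw [Complex.ofReal_natCast]; ring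
  exact_mod_cast this

/-- probability vectors -/
def IsProb (ν : ZMod p → ℝ) : Prop := (∀ x, 0 ≤ ν x) ∧ ∑ x, ν x = 1

/-- characteristic functions -/
def IsChar (φ : ZMod p → ℂ) : Prop := ∃ ν : ZMod p → ℝ, IsProb ν ∧ ∀ ξ, φ ξ = ft (fun x => (ν x : ℂ)) ξ

theorem IsProb.delta (a : ZMod p) : IsProb (fun x => if x = a then (1 : ℝ) else 0) := by
  refine ⟨fun x => ?_, ?_⟩
  · dsimp only; split_ifs <;> norm_num
  · simp

theorem IsChar.one : IsChar (fun _ : ZMod p => (1 : ℂ)) := by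
  refine ⟨_, IsProb.delta 0, fun ξ => ?_⟩
  simp only [ft]
  rw [sum_eq_single 0 (fun x _ hx => by simp [hx]) (fun h => absurd (mem_univ _) h)]
  simp [ee_zero]

theorem IsChar.mul {φ ψ : ZMod p → ℂ} (h1 : IsChar φ) (h2 : IsChar ψ) :
    IsChar (fun ξ => φ ξ * ψ ξ) := by
  obtain ⟨ν, ⟨hν, hν1⟩, hf⟩ := h1
  obtain ⟨μ, ⟨hμ, hμ1⟩, hg⟩ := h2
  refine ⟨fun x => ∑ a, ν a * μ (x - a), ⟨fun x => sum_nonneg fun a _ => mul_nonneg (hν _) (hμ _), ?_⟩, ?_⟩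
  · rw [sum_comm]
    have : ∀ a, ∑ x, ν a * μ (x - a) = ν a := fun a => by
      have h : ∑ x, μ (x - a) = ∑ x, μ x := Equiv.sum_comp (Equiv.subRight a) μ
      rw [← mul_sum, h, hμ1, mul_one]
    simp only [this, hν1]
  · intro ξ
    simp only [hf, hg]
    unfold ft
    rw [sum_mul_sum]
    simp only [Complex.ofReal_sum, sum_mul]
    rw [sum_comm (s := univ) (t := univ) (f := fun x a => ((ν a * μ (x - a) : ℝ) : ℂ) * ee (ξ * x))]
    refine sum_congr rfl fun a _ => ?_
    rw [← Equiv.sum_comp (Equiv.subRight a)]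
    refine sum_congr rfl fun x _ => ?_
    simp only [Equiv.subRight_apply]
    have : ee (ξ * x) = ee (ξ * a) * ee (ξ * (x - a)) := by
      rw [← ee_add]; congr 1; ring
    rw [this]; push_cast; ring

theorem IsChar.conj {φ : ZMod p → ℂ} (h1 : IsChar φ) : IsChar (fun ξ => starRingEnd ℂ (φ ξ)) := by
  obtain ⟨ν, ⟨hν, hν1⟩, hf⟩ := h1
  refine ⟨fun x => ν (-x), ⟨fun x => hν _, ?_⟩, ?_⟩
  · exact (Equiv.sum_comp (Equiv.neg _) ν).trans hν1
  · intro ξ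
    simp only [hf]
    unfold ft
    rw [map_sum, ← Equiv.sum_comp (Equiv.neg _)]
    refine sum_congr rfl fun x _ => ?_
    simp [← ee_neg]

theorem IsChar.pow {φ : ZMod p → ℂ} (h1 : IsChar φ) (m : ℕ) : IsChar (fun ξ => φ ξ ^ m) := by
  induction m with
  | zero => simpa using IsChar.one
  | succ m ih => simpa only [pow_succ] using ih.mul h1

theorem IsChar.norm_pow {φ : ZMod p → ℂ} (h1 : IsChar φ) (m : ℕ) :
    IsChar (fun ξ => ((‖φ ξ‖ ^ (2 * m) : ℝ) : ℂ)) := by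
  have := (h1.mul h1.conj).pow m
  convert this using 2 with ξ
  rw [Complex.mul_conj, Complex.normSq_eq_norm_sq, pow_mul]
  push_cast; ring

theorem IsChar.norm_le {φ : ZMod p → ℂ} (h1 : IsChar φ) (ξ) : ‖φ ξ‖ ≤ 1 := by
  obtain ⟨ν, ⟨hν, hν1⟩, hf⟩ := h1
  rw [hf, ← hν1]
  refine (norm_sum_le _ _).trans (sum_le_sum fun x _ => ?_)
  rw [norm_mul, ee_norm, mul_one, Complex.norm_real, Real.norm_of_nonneg (hν x)]

theorem dil_pairC {σ ν : ZMod p → ℝ} (h0 : σ 0 = 0) (g : ZMod p → ℂ) :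
    ∑ x, (dil σ ν x : ℂ) * g x = ∑ x, (ν x : ℂ) * ∑ y, (σ y : ℂ) * g (y * x) := by
  unfold dil
  simp only [Complex.ofReal_sum, sum_mul, mul_sum]
  rw [sum_comm, sum_comm (s := univ) (t := univ) (f := fun x y => (ν x : ℂ) * (σ y * g (y * x)))]
  refine sum_congr rfl fun y _ => ?_
  by_cases hy : y = 0
  · simp [hy, h0]
  rw [← Equiv.sum_comp (Equiv.mulLeft₀ y⁻¹ (inv_ne_zero hy)) (fun x => (ν x : ℂ) * (σ y * g (y * x)))]
  refine sum_congr rfl fun x _ => ?_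
  simp only [Equiv.mulLeft₀_apply]
  rw [mul_inv_cancel_left₀ hy]; push_cast; ring

/-- iterated multiplicative averages of the character -/
noncomputable def SS (σ : ZMod p → ℝ) : ℕ → ZMod p → ℂ
  | 0 => ee
  | k + 1 => fun ξ => ∑ y, (σ y : ℂ) * SS σ k (ξ * y)

theorem IsProb.dil {σ ν : ZMod p → ℝ} (h0 : σ 0 = 0) (hσ : IsProb σ) (hν : IsProb ν) :
    IsProb (dil σ ν) := ⟨dil_nonneg hσ.1 hν.1, dil_sum h0 hσ.2 hν.2⟩

theorem SS_repr {σ : ZMod p → ℝ} (h0 : σ 0 = 0) (hσ : IsProb σ) (k : ℕ) :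
    ∃ μ : ZMod p → ℝ, IsProb μ ∧ ∀ j ξ, SS σ (j + k) ξ = ∑ x, (μ x : ℂ) * SS σ j (ξ * x) := by
  induction k with
  | zero =>
    refine ⟨_, IsProb.delta 1, fun j ξ => ?_⟩
    rw [sum_eq_single 1 (fun x _ hx => by simp [hx]) (fun h => absurd (mem_univ _) h)]
    simp
  | succ k ih =>
    obtain ⟨μ, hμ, h⟩ := ih
    refine ⟨_, IsProb.dil h0 hσ hμ, fun j ξ => ?_⟩
    rw [dil_pairC h0]
    rw [← add_assoc, SS]
    simp only [h, mul_sum]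
    rw [sum_comm]
    refine sum_congr rfl fun x _ => sum_congr rfl fun y _ => ?_
    rw [mul_assoc ξ]; ring

theorem SS_isChar {σ : ZMod p → ℝ} (h0 : σ 0 = 0) (hσ : IsProb σ) (k : ℕ) : IsChar (SS σ k) := by
  obtain ⟨μ, hμ, h⟩ := SS_repr h0 hσ k
  refine ⟨μ, hμ, fun ξ => ?_⟩
  have := h 0 ξ
  rw [zero_add] at this
  rw [this]; rfl

theorem SS_le_one {σ : ZMod p → ℝ} (h0 : σ 0 = 0) (hσ : IsProb σ) (k : ℕ) (ξ) : ‖SS σ k ξ‖ ≤ 1 :=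
  (SS_isChar h0 hσ k).norm_le ξ

theorem avg_pow {μ : ZMod p → ℝ} (hμ : IsProb μ) (f : ZMod p → ℂ) (n : ℕ) :
    ‖∑ x, (μ x : ℂ) * f x‖ ^ n ≤ ∑ x, μ x * ‖f x‖ ^ n := by
  have h1 : ‖∑ x, (μ x : ℂ) * f x‖ ≤ ∑ x, μ x * ‖f x‖ := by
    refine (norm_sum_le _ _).trans (sum_le_sum fun x _ => ?_)
    rw [norm_mul, Complex.norm_real, Real.norm_of_nonneg (hμ.1 x)]
  refine (pow_le_pow_left₀ (norm_nonneg _) h1 n).trans ?_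
  exact Real.pow_arith_mean_le_arith_mean_pow univ μ (fun x => ‖f x‖) (fun x _ => hμ.1 x) hμ.2
    (fun x _ => norm_nonneg _) n

theorem NN_fourier (W : ZMod p → ℝ) :
    p * NN W W = ∑ ξ, ‖ft (fun x => (W x : ℂ)) ξ‖ ^ 4 := by
  have h := parseval (fun x => ((corr W W x : ℝ) : ℂ))
  have h2 : ∀ ξ, ‖ft (fun x => ((corr W W x : ℝ) : ℂ)) ξ‖ = ‖ft (fun x => (W x : ℂ)) ξ‖ ^ 2 := by
    intro ξ
    have : ft (fun x => ((corr W W x : ℝ) : ℂ)) ξ =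
        ft (fun x => (W x : ℂ)) ξ * starRingEnd ℂ (ft (fun x => (W x : ℂ)) ξ) := by
      unfold ft corr
      rw [map_sum, sum_mul_sum]
      simp only [Complex.ofReal_sum, sum_mul]
      rw [sum_comm]
      refine sum_congr rfl fun a _ => ?_
      rw [← Equiv.sum_comp (Equiv.subLeft a)]
      refine sum_congr rfl fun x _ => ?_
      simp only [Equiv.subLeft_apply, map_mul, Complex.conj_ofReal, sub_sub_cancel, ← ee_neg]
      rw [mul_sub, sub_eq_add_neg, ee_add]
      push_cast; ring
    rw [this, norm_mul, RCLike.norm_conj, sq]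
  simp only [h2] at h
  have h3 : ∀ x, ‖((corr W W x : ℝ) : ℂ)‖ ^ 2 = corr W W x ^ 2 := fun x => by
    rw [Complex.norm_real, Real.norm_eq_abs, sq_abs]
  simp only [h3] at h
  unfold NN
  rw [← h]
  refine sum_congr rfl fun ξ _ => ?_
  rw [← pow_mul]

/-- moments -/
noncomputable def QQ (σ : ZMod p → ℝ) (j m : ℕ) : ℝ := (∑ ξ, ‖SS σ j ξ‖ ^ (4 * m)) / p

theorem QQ_repr {σ : ZMod p → ℝ} (h0 : σ 0 = 0) (hσ : IsProb σ) (j m : ℕ) :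
    ∃ ν : ZMod p → ℝ, IsProb ν ∧ (∀ ξ, ((‖SS σ j ξ‖ ^ (2 * m) : ℝ) : ℂ) = ft (fun x => (ν x : ℂ)) ξ) ∧
      ∑ x, ν x ^ 2 = QQ σ j m := by
  obtain ⟨ν, hν, hf⟩ := (SS_isChar h0 hσ j).norm_pow m
  refine ⟨ν, hν, hf, ?_⟩
  have h := parseval (fun x => (ν x : ℂ))
  simp only [← hf, Complex.norm_real, Real.norm_eq_abs, sq_abs] at h
  have hp0 : (p : ℝ) ≠ 0 := by exact_mod_cast hp.out.ne_zero
  unfold QQ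
  rw [eq_div_iff hp0, mul_comm, ← h]
  refine sum_congr rfl fun ξ _ => ?_
  rw [← pow_mul]; congr 1; ring

theorem QQ_step {σ : ZMod p → ℝ} (h0 : σ 0 = 0) (hσ : IsProb σ) (j m : ℕ) {ν : ZMod p → ℝ}
    (hf : ∀ ξ, ((‖SS σ j ξ‖ ^ (2 * m) : ℝ) : ℂ) = ft (fun x => (ν x : ℂ)) ξ) :
    QQ σ (j + 1) (2 * m) ≤ NN (dil σ ν) (dil σ ν) := by
  have hp0 : (0 : ℝ) < p := by exact_mod_cast hp.out.pos
  unfold QQ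
  rw [div_le_iff₀ hp0, mul_comm (NN _ _), NN_fourier]
  refine sum_le_sum fun ξ _ => ?_
  have h1 : ft (fun x => (dil σ ν x : ℂ)) ξ = ((∑ y, σ y * ‖SS σ j (ξ * y)‖ ^ (2 * m) : ℝ) : ℂ) := by
    unfold ft
    rw [dil_pairC h0 (fun x => ee (ξ * x))]
    rw [Complex.ofReal_sum]
    simp only [Complex.ofReal_mul, hf, mul_sum]
    unfold ft
    rw [sum_comm]
    refine sum_congr rfl fun y _ => ?_
    rw [mul_sum]
    refine sum_congr rfl fun x _ => ?_
    rw [mul_assoc ξ]; ring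
  rw [h1, Complex.norm_real, Real.norm_of_nonneg (sum_nonneg fun y _ => mul_nonneg (hσ.1 _) (by positivity))]
  have h2 : ‖SS σ (j + 1) ξ‖ ^ (2 * m) ≤ ∑ y, σ y * ‖SS σ j (ξ * y)‖ ^ (2 * m) := avg_pow hσ _ _
  calc ‖SS σ (j + 1) ξ‖ ^ (4 * (2 * m)) = (‖SS σ (j + 1) ξ‖ ^ (2 * m)) ^ 4 := by
        rw [← pow_mul]; congr 1; ring
    _ ≤ _ := pow_le_pow_left₀ (by positivity) h2 4

theorem QQ_start {σ : ZMod p → ℝ} (h0 : σ 0 = 0) (hσ : IsProb σ) {s : ℝ} (hs : ∀ y, σ y ≤ s) :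
    QQ σ 1 1 ≤ s := by
  have hp0 : (0 : ℝ) < p := by exact_mod_cast hp.out.pos
  unfold QQ
  rw [div_le_iff₀ hp0]
  have h := parseval (fun x => (σ x : ℂ))
  calc ∑ ξ, ‖SS σ 1 ξ‖ ^ (4 * 1) ≤ ∑ ξ, ‖SS σ 1 ξ‖ ^ 2 := by
        refine sum_le_sum fun ξ _ => ?_
        exact pow_le_pow_of_le_one (norm_nonneg _) (SS_le_one h0 hσ 1 ξ) (by norm_num)
    _ = p * ∑ x, σ x ^ 2 := by
        simp only [Complex.norm_real, Real.norm_eq_abs, sq_abs] at h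
        exact h
    _ ≤ p * ∑ x, s * σ x := by
        gcongr with x
        rw [sq]; exact mul_le_mul_of_nonneg_right (hs x) (hσ.1 x)
    _ = s * p := by rw [← mul_sum, hσ.2]; ring

theorem SS_final {σ : ZMod p → ℝ} (h0 : σ 0 = 0) (hσ : IsProb σ) (j m : ℕ) {ξ : ZMod p} (hξ : ξ ≠ 0) :
    ‖SS σ (j + j) ξ‖ ^ (8 * m ^ 2) ≤ p * QQ σ j m ^ 2 := by
  have hp0 : (0 : ℝ) < p := by exact_mod_cast hp.out.pos
  obtain ⟨μ, hμ, hSμ⟩ := SS_repr h0 hσ j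
  obtain ⟨ν, hν, hf, hQ⟩ := QQ_repr h0 hσ j m
  have hS0 : ∀ ζ, SS σ j ζ = ∑ x, (μ x : ℂ) * ee (ζ * x) := fun ζ => by
    have := hSμ 0 ζ
    rw [zero_add] at this; exact this
  have a1 : ‖SS σ (j + j) ξ‖ ^ (2 * m) ≤ ∑ x, μ x * ‖SS σ j (ξ * x)‖ ^ (2 * m) := by
    rw [hSμ]; exact avg_pow hμ _ _
  have a2 : ((∑ x, μ x * ‖SS σ j (ξ * x)‖ ^ (2 * m) : ℝ) : ℂ) = ∑ y, (ν y : ℂ) * SS σ j (ξ * y) := by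
    rw [Complex.ofReal_sum]
    simp only [Complex.ofReal_mul, hf]
    simp only [hS0]
    unfold ft
    simp only [mul_sum]
    rw [sum_comm]
    refine sum_congr rfl fun y _ => sum_congr rfl fun x _ => ?_
    rw [mul_right_comm ξ]; ring
  have a3 : ‖SS σ (j + j) ξ‖ ^ (2 * m) ≤ ‖∑ y, (ν y : ℂ) * SS σ j (ξ * y)‖ := by
    rw [← a2, Complex.norm_real]
    exact a1.trans (Real.le_norm_self _)
  have a4 : ‖SS σ (j + j) ξ‖ ^ (4 * m ^ 2) ≤ ∑ y, ν y * ‖SS σ j (ξ * y)‖ ^ (2 * m) := by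
    calc ‖SS σ (j + j) ξ‖ ^ (4 * m ^ 2) = (‖SS σ (j + j) ξ‖ ^ (2 * m)) ^ (2 * m) := by
          rw [← pow_mul]; congr 1; ring
      _ ≤ ‖∑ y, (ν y : ℂ) * SS σ j (ξ * y)‖ ^ (2 * m) := pow_le_pow_left₀ (by positivity) a3 _
      _ ≤ _ := avg_pow hν _ _
  calc ‖SS σ (j + j) ξ‖ ^ (8 * m ^ 2) = (‖SS σ (j + j) ξ‖ ^ (4 * m ^ 2)) ^ 2 := by
        rw [← pow_mul]; congr 1; ring
    _ ≤ (∑ y, ν y * ‖SS σ j (ξ * y)‖ ^ (2 * m)) ^ 2 := pow_le_pow_left₀ (by positivity) a4 _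
    _ ≤ (∑ y, ν y ^ 2) * ∑ y, (‖SS σ j (ξ * y)‖ ^ (2 * m)) ^ 2 := sum_mul_sq_le_sq_mul_sq _ _ _
    _ = QQ σ j m * (p * QQ σ j m) := by
      rw [hQ]; congr 1
      refine (Equiv.sum_comp (Equiv.mulLeft₀ ξ hξ) (fun y => (‖SS σ j y‖ ^ (2 * m)) ^ 2)).trans ?_
      unfold QQ
      rw [mul_div_cancel₀ _ hp0.ne']
      refine sum_congr rfl fun y _ => ?_
      rw [← pow_mul]; congr 1; ring
    _ = _ := by ring

theorem SS_mono {σ : ZMod p → ℝ} (h0 : σ 0 = 0) (hσ : IsProb σ) {k : ℕ} {b : ℝ}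
    (h : ∀ ξ, ξ ≠ 0 → ‖SS σ k ξ‖ ≤ b) (l : ℕ) : ∀ ξ, ξ ≠ 0 → ‖SS σ (k + l) ξ‖ ≤ b := by
  induction l with
  | zero => exact h
  | succ l ih =>
    intro ξ hξ
    rw [← add_assoc, SS]
    refine (norm_sum_le _ _).trans ?_
    calc ∑ y, ‖(σ y : ℂ) * SS σ (k + l) (ξ * y)‖ ≤ ∑ y, σ y * b := by
          refine sum_le_sum fun y _ => ?_
          by_cases hy : y = 0
          · simp [hy, h0]
          rw [norm_mul, Complex.norm_real, Real.norm_of_nonneg (hσ.1 y)]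
          exact mul_le_mul_of_nonneg_left (ih _ (mul_ne_zero hξ hy)) (hσ.1 y)
      _ = b := by rw [← sum_mul, hσ.2, one_mul]

end

theorem bgk (ε : ℝ) (hε : 0 < ε) : ∃ k : ℕ, ∃ γ : ℝ, 0 < γ ∧ ∃ p0 : ℕ, ∀ (p : ℕ) [Fact p.Prime],
    p0 ≤ p → ∀ (σ : ZMod p → ℝ), IsProb σ → σ 0 = 0 → (∀ y, σ y ≤ (p : ℝ) ^ (-ε)) →
      ∀ ξ, ξ ≠ 0 → ‖SS σ k ξ‖ ≤ (p : ℝ) ^ (-γ) := by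
  obtain ⟨c, hc, p0, hflat⟩ := flat_main ε hε
  obtain ⟨I, hI⟩ := exists_nat_ge (3 / 4 / c)
  rw [div_le_iff₀ hc] at hI
  refine ⟨2 * (I + 1), 1 / (16 * 4 ^ I), by positivity, p0, ?_⟩
  intro p hp hpp σ hσ h0 hs
  have hp1 : (1 : ℝ) < p := by exact_mod_cast hp.out.one_lt
  have hp0' : (0 : ℝ) < p := by linarith
  have key : ∃ i ≤ I, QQ σ (i + 1) (2 ^ i) ≤ (p : ℝ) ^ (-(3 / 4) : ℝ) := by
    by_contra hcon
    push Not at hcon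
    have hind : ∀ i ≤ I, QQ σ (i + 1) (2 ^ i) ≤ (p : ℝ) ^ (-(c * i)) * (p : ℝ) ^ (-ε) := by
      intro i
      induction i with
      | zero => intro _; simpa using QQ_start h0 hσ hs
      | succ i ih =>
        intro hi
        have hih := ih (by omega)
        have hbig := hcon i (by omega)
        obtain ⟨ν, hν, hf, hQ⟩ := QQ_repr h0 hσ (i + 1) (2 ^ i)
        have hle : QQ σ (i + 1) (2 ^ i) ≤ (p : ℝ) ^ (-ε) := by
          refine hih.trans ?_
          apply mul_le_of_le_one_left (by positivity)
          apply Real.rpow_le_one_of_one_le_of_nonpos hp1.le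
          have : 0 ≤ c * i := by positivity
          linarith
        have h1 := hflat p hpp σ ν hσ.1 hν.1 hσ.2 hν.2 h0 hs _ hQ.le hbig hle
        have h2 := QQ_step h0 hσ (i + 1) (2 ^ i) hf
        rw [pow_succ', ]
        refine (h2.trans h1).trans ?_
        calc (p : ℝ) ^ (-c) * QQ σ (i + 1) (2 ^ i)
            ≤ (p : ℝ) ^ (-c) * ((p : ℝ) ^ (-(c * i)) * (p : ℝ) ^ (-ε)) := by gcongr
          _ = _ := by
            rw [← mul_assoc, ← Real.rpow_add hp0']
            congr 2; push_cast; ring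
    have h1 := hind I le_rfl
    have h2 := hcon I le_rfl
    have h3 : (p : ℝ) ^ (-(c * I)) * (p : ℝ) ^ (-ε) ≤ (p : ℝ) ^ (-(3 / 4) : ℝ) := by
      rw [← Real.rpow_add hp0']
      apply Real.rpow_le_rpow_of_exponent_le hp1.le
      linarith
    linarith
  obtain ⟨i, hi, hq⟩ := key
  have hfin : ∀ ξ : ZMod p, ξ ≠ 0 → ‖SS σ ((i + 1) + (i + 1)) ξ‖ ≤ (p : ℝ) ^ (-(1 / (16 * 4 ^ I)) : ℝ) := by
    intro ξ hξ
    have h1 := SS_final h0 hσ (i + 1) (2 ^ i) hξ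
    have hq0 : 0 ≤ QQ σ (i + 1) (2 ^ i) := by unfold QQ; positivity
    have h2 : ‖SS σ ((i + 1) + (i + 1)) ξ‖ ^ (8 * 4 ^ I) ≤ (p : ℝ) ^ (-(1 / 2) : ℝ) := by
      calc ‖SS σ ((i + 1) + (i + 1)) ξ‖ ^ (8 * 4 ^ I)
          ≤ ‖SS σ ((i + 1) + (i + 1)) ξ‖ ^ (8 * (2 ^ i) ^ 2) := by
            apply pow_le_pow_of_le_one (norm_nonneg _) (SS_le_one h0 hσ _ ξ)
            rw [← pow_mul, mul_comm i, pow_mul]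
            norm_num
            exact Nat.pow_le_pow_right (by norm_num) hi
        _ ≤ p * QQ σ (i + 1) (2 ^ i) ^ 2 := h1
        _ ≤ (p : ℝ) ^ (1 : ℝ) * ((p : ℝ) ^ (-(3 / 4) : ℝ)) ^ 2 := by
            rw [Real.rpow_one]; gcongr
        _ = _ := by
            rw [← Real.rpow_natCast, ← Real.rpow_mul hp0'.le, ← Real.rpow_add hp0']
            norm_num
    have h3 : (p : ℝ) ^ (-(1 / 2) : ℝ) = ((p : ℝ) ^ (-(1 / (16 * 4 ^ I)) : ℝ)) ^ (8 * 4 ^ I) := by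
      rw [← Real.rpow_natCast ((p : ℝ) ^ (-(1 / (16 * 4 ^ I)) : ℝ)), ← Real.rpow_mul hp0'.le]
      congr 1
      push_cast
      field_simp
      norm_num
    rw [h3] at h2
    exact le_of_pow_le_pow_left₀ (by positivity) (by positivity) h2
  have := SS_mono h0 hσ hfin (2 * (I - i))
  intro ξ hξ
  have h4 := this ξ hξ
  have h5 : (i + 1) + (i + 1) + 2 * (I - i) = 2 * (I + 1) := by omega
  rwa [h5] at h4


section
variable {p : ℕ} [hp : Fact p.Prime]

/-- squared norm -/
noncomputable def nn (F : ZMod p → ℂ) : ℝ := ∑ ξ, ‖F ξ‖ ^ 2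

/-- inner product -/
noncomputable def ip (F H : ZMod p → ℂ) : ℂ := ∑ ξ, F ξ * starRingEnd ℂ (H ξ)

theorem nn_nonneg (F : ZMod p → ℂ) : 0 ≤ nn F := sum_nonneg fun _ _ => sq_nonneg _

theorem ip_self (F : ZMod p → ℂ) : ‖ip F F‖ = nn F := by
  have : ip F F = ((nn F : ℝ) : ℂ) := by
    unfold ip nn
    rw [Complex.ofReal_sum]
    refine sum_congr rfl fun ξ _ => ?_
    rw [Complex.mul_conj, Complex.normSq_eq_norm_sq]
  rw [this, Complex.norm_real, Real.norm_of_nonneg (nn_nonneg F)]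

theorem ip_le (F H : ZMod p → ℂ) : ‖ip F H‖ ^ 2 ≤ nn F * nn H := by
  have h1 : ‖ip F H‖ ≤ ∑ ξ, ‖F ξ‖ * ‖H ξ‖ := by
    refine (norm_sum_le _ _).trans (le_of_eq ?_)
    refine sum_congr rfl fun ξ _ => ?_
    rw [norm_mul, RCLike.norm_conj]
  refine (pow_le_pow_left₀ (norm_nonneg _) h1 2).trans ?_
  exact sum_mul_sq_le_sq_mul_sq _ _ _

/-- the chain of Cauchy-Schwarz inequalities -/
theorem op_chain (T U : (ZMod p → ℂ) → (ZMod p → ℂ)) (hTU : ∀ F H, ip (T F) H = ip F (U H))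
    (hUT : ∀ F H, ip (U F) H = ip F (T H)) (F : ZMod p → ℂ) (i : ℕ) :
    nn (T F) ^ (2 ^ (i + 1)) ≤ nn F ^ (2 ^ (i + 1) - 1) * nn ((fun F => U (T F))^[2 ^ i] F) := by
  set P : (ZMod p → ℂ) → (ZMod p → ℂ) := fun F => U (T F) with hP
  have hPP : ∀ F H, ip (P F) H = ip F (P H) := fun F H => by
    simp only [hP]; rw [hUT, hTU]
  have hPit : ∀ a F H, ip (P^[a] F) H = ip F (P^[a] H) := by
    intro a
    induction a with
    | zero => intro F H; rfl
    | succ a ih =>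
      intro F H
      rw [Function.iterate_succ_apply, ih, hPP, Function.iterate_succ_apply' P a H]
  induction i with
  | zero =>
    have h := ip_le F (P F)
    have h2 : ip F (P F) = ip (T F) (T F) := by rw [hTU]
    rw [h2, ip_self] at h
    simpa using h
  | succ i ih =>
    have h := ip_le F (P^[2 ^ i + 2 ^ i] F)
    have h2 : ip F (P^[2 ^ i + 2 ^ i] F) = ip (P^[2 ^ i] F) (P^[2 ^ i] F) := by
      rw [Function.iterate_add_apply, ← hPit]
    rw [h2, ip_self, ← two_mul, ← pow_succ'] at h
    have hn := nn_nonneg F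
    calc nn (T F) ^ (2 ^ (i + 1 + 1)) = (nn (T F) ^ (2 ^ (i + 1))) ^ 2 := by
          rw [← pow_mul, pow_succ 2 (i + 1)]
      _ ≤ (nn F ^ (2 ^ (i + 1) - 1) * nn (P^[2 ^ i] F)) ^ 2 :=
          pow_le_pow_left₀ (pow_nonneg (nn_nonneg _) _) ih 2
      _ = (nn F ^ (2 ^ (i + 1) - 1)) ^ 2 * nn (P^[2 ^ i] F) ^ 2 := by ring
      _ ≤ (nn F ^ (2 ^ (i + 1) - 1)) ^ 2 * (nn F * nn (P^[2 ^ (i + 1)] F)) := by gcongr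
      _ = _ := by
          rw [← mul_assoc, ← pow_mul, ← pow_succ]
          congr 2
          have : 1 ≤ 2 ^ (i + 1) := Nat.one_le_two_pow
          rw [pow_succ 2 (i + 1)]
          omega

/-- fibre weights -/
noncomputable def sig (G : Finset (ZMod p × ZMod p)) (s : ZMod p) : ℝ :=
  (#(G.filter fun g => g.1 = s) : ℝ) / #G

/-- fibre exponential sums -/
noncomputable def Th (G : Finset (ZMod p × ZMod p)) (s ξ : ZMod p) : ℂ :=
  (∑ g ∈ G.filter (fun g => g.1 = s), ee (ξ * g.2)) / #G

noncomputable def TT (G : Finset (ZMod p × ZMod p)) (F : ZMod p → ℂ) (ξ : ZMod p) : ℂ :=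
  ∑ s, Th G s ξ * F (s * ξ)

noncomputable def UU (G : Finset (ZMod p × ZMod p)) (F : ZMod p → ℂ) (ξ : ZMod p) : ℂ :=
  ∑ s, starRingEnd ℂ (Th G s (s⁻¹ * ξ)) * F (s⁻¹ * ξ)

/-- ratio law -/
noncomputable def rat (σ : ZMod p → ℝ) (v : ZMod p) : ℝ := ∑ s, σ s * σ (v * s)

/-- powers of the ratio law -/
noncomputable def rk (ρ : ZMod p → ℝ) : ℕ → ZMod p → ℝ
  | 0 => fun x => if x = 1 then 1 else 0
  | k + 1 => dil ρ (rk ρ k)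

variable {G : Finset (ZMod p × ZMod p)}

theorem sig_prob (hne : G.Nonempty) : IsProb (sig G) := by
  have h0 : (#G : ℝ) ≠ 0 := by exact_mod_cast hne.card_pos.ne'
  refine ⟨fun s => by unfold sig; positivity, ?_⟩
  unfold sig
  rw [← sum_div, div_eq_one_iff_eq h0]
  have := card_eq_sum_card_fiberwise (s := G) (t := univ) (f := fun g => g.1) (by simp)
  exact_mod_cast this.symm

theorem fib_empty (hG : ∀ g ∈ G, g.1 ≠ 0) : (G.filter fun g => g.1 = 0) = ∅ :=
  filter_eq_empty_iff.2 fun {_} hg => hG _ hg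

theorem sig_zero (hG : ∀ g ∈ G, g.1 ≠ 0) : sig G 0 = 0 := by
  unfold sig; rw [fib_empty hG]; simp

theorem Th_zero (hG : ∀ g ∈ G, g.1 ≠ 0) (ξ : ZMod p) : Th G 0 ξ = 0 := by
  unfold Th; rw [fib_empty hG]; simp

theorem Th_le (s ξ : ZMod p) : ‖Th G s ξ‖ ≤ sig G s := by
  unfold Th sig
  rw [norm_div, Complex.norm_natCast]
  gcongr
  refine (norm_sum_le _ _).trans (le_of_eq ?_)
  simp [ee_norm]

theorem sum_mulLeft {M : Type*} [AddCommMonoid M] (f : ZMod p → M) {y : ZMod p} (hy : y ≠ 0) :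
    ∑ x, f (y * x) = ∑ x, f x := Equiv.sum_comp (Equiv.mulLeft₀ y hy) f

theorem adj1 (hG : ∀ g ∈ G, g.1 ≠ 0) (F H : ZMod p → ℂ) : ip (TT G F) H = ip F (UU G H) := by
  unfold ip TT UU
  simp only [map_sum, map_mul, sum_mul, mul_sum, Complex.conj_conj]
  rw [sum_comm]
  conv_rhs => rw [sum_comm]
  refine sum_congr rfl fun s _ => ?_
  by_cases hs : s = 0
  · subst hs; simp [Th_zero hG]
  rw [← sum_mulLeft (fun x => F x * (Th G s (s⁻¹ * x) * starRingEnd ℂ (H (s⁻¹ * x)))) hs]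
  refine sum_congr rfl fun x _ => ?_
  rw [inv_mul_cancel_left₀ hs]; ring

theorem ip_symm (F H : ZMod p → ℂ) : ip F H = starRingEnd ℂ (ip H F) := by
  unfold ip
  rw [map_sum]
  refine sum_congr rfl fun x _ => ?_
  rw [map_mul, Complex.conj_conj, mul_comm]

theorem adj2 (hG : ∀ g ∈ G, g.1 ≠ 0) (F H : ZMod p → ℂ) : ip (UU G F) H = ip F (TT G H) := by
  rw [ip_symm, ← adj1 hG, ← ip_symm]

theorem wt_sq (w f : ZMod p → ℂ) (σ : ZMod p → ℝ) (hσ : IsProb σ) (hw : ∀ s, ‖w s‖ ≤ σ s) :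
    ‖∑ s, w s * f s‖ ^ 2 ≤ ∑ s, ‖w s‖ * ‖f s‖ ^ 2 := by
  have h1 : ‖∑ s, w s * f s‖ ≤ ∑ s, ‖w s‖ * ‖f s‖ := by
    refine (norm_sum_le _ _).trans (le_of_eq ?_)
    simp
  refine (pow_le_pow_left₀ (norm_nonneg _) h1 2).trans ?_
  have h2 := sum_sq_le_sum_mul_sum_of_sq_le_mul (univ : Finset (ZMod p))
    (r := fun s => ‖w s‖ * ‖f s‖) (f := fun s => ‖w s‖) (g := fun s => ‖w s‖ * ‖f s‖ ^ 2)
    (fun a _ => norm_nonneg _) (fun a _ => by positivity) (fun a _ => le_of_eq (by ring))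
  refine h2.trans ?_
  apply mul_le_of_le_one_left (sum_nonneg fun _ _ => by positivity)
  rw [← hσ.2]
  exact sum_le_sum fun s _ => hw s

theorem TT_sq (hne : G.Nonempty) (F : ZMod p → ℂ) (ξ) :
    ‖TT G F ξ‖ ^ 2 ≤ ∑ s, ‖Th G s ξ‖ * ‖F (s * ξ)‖ ^ 2 :=
  wt_sq _ _ _ (sig_prob hne) fun s => Th_le s ξ

theorem TT_sq' (hne : G.Nonempty) (F : ZMod p → ℂ) (ξ) :
    ‖TT G F ξ‖ ^ 2 ≤ ∑ s, sig G s * ‖F (s * ξ)‖ ^ 2 :=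
  (TT_sq hne F ξ).trans (sum_le_sum fun s _ => mul_le_mul_of_nonneg_right (Th_le s ξ) (by positivity))

theorem UU_sq' (hne : G.Nonempty) (F : ZMod p → ℂ) (ξ) :
    ‖UU G F ξ‖ ^ 2 ≤ ∑ s, sig G s * ‖F (s⁻¹ * ξ)‖ ^ 2 := by
  refine (wt_sq _ _ _ (sig_prob hne) fun s => ?_).trans
    (sum_le_sum fun s _ => mul_le_mul_of_nonneg_right ?_ (by positivity))
  · rw [RCLike.norm_conj]; exact Th_le _ _
  · rw [RCLike.norm_conj]; exact Th_le _ _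

theorem UU_contr (hne : G.Nonempty) (hG : ∀ g ∈ G, g.1 ≠ 0) (F : ZMod p → ℂ) :
    nn (UU G F) ≤ nn F := by
  unfold nn
  refine (sum_le_sum fun ξ _ => UU_sq' hne F ξ).trans (le_of_eq ?_)
  rw [sum_comm]
  have : ∀ s, ∑ ξ, sig G s * ‖F (s⁻¹ * ξ)‖ ^ 2 = sig G s * ∑ ξ, ‖F ξ‖ ^ 2 := by
    intro s
    by_cases hs : s = 0
    · subst hs; simp [sig_zero hG]
    rw [← mul_sum, sum_mulLeft (fun x => ‖F x‖ ^ 2) (inv_ne_zero hs)]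
  rw [sum_congr rfl fun s _ => this s, ← sum_mul, (sig_prob hne).2, one_mul]

theorem rat_sum {σ : ZMod p → ℝ} (h0 : σ 0 = 0) (g : ZMod p → ℝ) :
    ∑ v, rat σ v * g v = ∑ s, σ s * ∑ u, σ u * g (u * s⁻¹) := by
  unfold rat
  simp only [sum_mul, mul_sum]
  rw [sum_comm]
  refine sum_congr rfl fun s _ => ?_
  by_cases hs : s = 0
  · subst hs; simp [h0]
  rw [← sum_mulLeft (fun u => σ s * (σ u * g (u * s⁻¹))) hs]
  refine sum_congr rfl fun v _ => ?_
  rw [mul_comm s v, mul_inv_cancel_right₀ hs]; ring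

theorem rat_prob {σ : ZMod p → ℝ} (h0 : σ 0 = 0) (hσ : IsProb σ) : IsProb (rat σ) := by
  refine ⟨fun v => sum_nonneg fun s _ => mul_nonneg (hσ.1 _) (hσ.1 _), ?_⟩
  have := rat_sum h0 (fun _ => 1)
  simpa [hσ.2] using this

theorem rat_zero {σ : ZMod p → ℝ} (h0 : σ 0 = 0) : rat σ 0 = 0 := by simp [rat, h0]

theorem rat_le {σ : ZMod p → ℝ} (hσ : IsProb σ) {b : ℝ} (hb : ∀ y, σ y ≤ b) (v) : rat σ v ≤ b := by
  unfold rat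
  calc ∑ s, σ s * σ (v * s) ≤ ∑ s, σ s * b :=
        sum_le_sum fun s _ => mul_le_mul_of_nonneg_left (hb _) (hσ.1 _)
    _ = b := by rw [← sum_mul, hσ.2, one_mul]

theorem rat_symm (σ : ZMod p → ℝ) (v : ZMod p) : rat σ v⁻¹ = rat σ v := by
  by_cases hv : v = 0
  · subst hv; simp
  unfold rat
  rw [← sum_mulLeft (fun s => σ s * σ (v⁻¹ * s)) hv]
  refine sum_congr rfl fun s _ => ?_
  rw [inv_mul_cancel_left₀ hv, mul_comm]

theorem rk_prob {ρ : ZMod p → ℝ} (h0 : ρ 0 = 0) (hρ : IsProb ρ) (k : ℕ) : IsProb (rk ρ k) := by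
  induction k with
  | zero => exact IsProb.delta 1
  | succ k ih => exact IsProb.dil h0 hρ ih

theorem rk_zero {ρ : ZMod p → ℝ} (h0 : ρ 0 = 0) (k : ℕ) : rk ρ k 0 = 0 := by
  induction k with
  | zero => simp [rk]
  | succ k ih => simp [rk, dil, ih]

theorem rk_symm {ρ : ZMod p → ℝ} (hs : ∀ v, ρ v⁻¹ = ρ v) (k : ℕ) (v) : rk ρ k v⁻¹ = rk ρ k v := by
  induction k generalizing v with
  | zero => simp [rk]
  | succ k ih =>
    simp only [rk, dil]
    rw [← Equiv.sum_comp (Equiv.inv (ZMod p))]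
    refine sum_congr rfl fun y _ => ?_
    simp only [Equiv.inv_apply]
    rw [hs, ← ih, mul_inv, inv_inv, inv_inv]

theorem rk_SS {ρ : ZMod p → ℝ} (h0 : ρ 0 = 0) (k : ℕ) (ξ) :
    SS ρ k ξ = ∑ x, (rk ρ k x : ℂ) * ee (ξ * x) := by
  induction k generalizing ξ with
  | zero =>
    rw [sum_eq_single 1 (fun x _ hx => by simp [rk, hx]) (fun h => absurd (mem_univ _) h)]
    simp [rk, SS]
  | succ k ih =>
    simp only [rk, SS]
    rw [dil_pairC h0]
    simp only [ih, mul_sum]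
    rw [sum_comm]
    refine sum_congr rfl fun x _ => sum_congr rfl fun y _ => ?_
    rw [mul_assoc ξ]; ring

theorem PP_sq (hne : G.Nonempty) (hG : ∀ g ∈ G, g.1 ≠ 0) (F : ZMod p → ℂ) (ω) :
    ‖UU G (TT G F) ω‖ ^ 2 ≤ ∑ v, rat (sig G) v * ‖F (v * ω)‖ ^ 2 := by
  rw [rat_sum (sig_zero hG) (fun v => ‖F (v * ω)‖ ^ 2)]
  refine (UU_sq' hne _ ω).trans (sum_le_sum fun s _ => ?_)
  refine mul_le_mul_of_nonneg_left ?_ ((sig_prob hne).1 s)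
  refine (TT_sq' hne F _).trans (le_of_eq ?_)
  refine sum_congr rfl fun u _ => ?_
  rw [mul_assoc]

theorem Pk_sq (hne : G.Nonempty) (hG : ∀ g ∈ G, g.1 ≠ 0) (k : ℕ) (F : ZMod p → ℂ) (ω) :
    ‖(fun F => UU G (TT G F))^[k] F ω‖ ^ 2 ≤ ∑ v, rk (rat (sig G)) k v * ‖F (v * ω)‖ ^ 2 := by
  induction k generalizing F with
  | zero =>
    rw [sum_eq_single 1 (fun x _ hx => by simp [rk, hx]) (fun h => absurd (mem_univ _) h)]
    simp [rk]
  | succ k ih =>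
    rw [Function.iterate_succ_apply]
    refine (ih _).trans ?_
    simp only [rk]
    rw [dil_pair (rat_zero (sig_zero hG)) (fun v => ‖F (v * ω)‖ ^ 2)]
    refine sum_le_sum fun v _ => ?_
    refine mul_le_mul_of_nonneg_left ?_
      ((rk_prob (rat_zero (sig_zero hG)) (rat_prob (sig_zero hG) (sig_prob hne)) k).1 v)
    refine (PP_sq hne hG F _).trans (le_of_eq ?_)
    refine sum_congr rfl fun u _ => ?_
    rw [mul_assoc]

theorem Th_avg (hne : G.Nonempty) {μ : ZMod p → ℝ} (hμ : IsProb μ) {τ : ℝ} (hτ : 0 ≤ τ)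
    (h : ∀ ξ, ξ ≠ 0 → ‖∑ x, (μ x : ℂ) * ee (ξ * x)‖ ≤ τ) (s : ZMod p) {ζ : ZMod p} (hζ : ζ ≠ 0) :
    ∑ u, μ u * ‖Th G s (u * ζ)‖ ≤
      (√(#(G.filter fun g => g.1 = s) : ℝ) + #(G.filter fun g => g.1 = s) * √τ) / #G := by
  set Gs := G.filter (fun g => g.1 = s) with hGs
  have hpos : (0 : ℝ) < #G := by exact_mod_cast hne.card_pos
  set m : ℝ := (#Gs : ℝ) with hm
  have hm0 : 0 ≤ m := by positivity
  have h1 : (∑ u, μ u * ‖Th G s (u * ζ)‖) ^ 2 ≤ ∑ u, μ u * ‖Th G s (u * ζ)‖ ^ 2 :=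
    Real.pow_arith_mean_le_arith_mean_pow univ μ _ (fun x _ => hμ.1 x) hμ.2
      (fun x _ => norm_nonneg _) 2
  have h2 : ((∑ u, μ u * ‖Th G s (u * ζ)‖ ^ 2 : ℝ) : ℂ) =
      (∑ a ∈ Gs, ∑ b ∈ Gs, ∑ u, (μ u : ℂ) * ee (ζ * (a.2 - b.2) * u)) / (#G : ℂ) ^ 2 := by
    rw [Complex.ofReal_sum]
    have : ∀ u, ((μ u * ‖Th G s (u * ζ)‖ ^ 2 : ℝ) : ℂ) =
        (∑ a ∈ Gs, ∑ b ∈ Gs, (μ u : ℂ) * ee (ζ * (a.2 - b.2) * u)) / (#G : ℂ) ^ 2 := by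
      intro u
      rw [Complex.ofReal_mul, ← Complex.normSq_eq_norm_sq, ← Complex.mul_conj]
      unfold Th
      rw [map_div₀, Complex.conj_natCast, div_mul_div_comm, map_sum, sum_mul_sum, ← sq, mul_div_assoc',
        mul_sum]
      congr 1
      refine sum_congr rfl fun a _ => ?_
      rw [mul_sum]
      refine sum_congr rfl fun b _ => ?_
      rw [← ee_neg, ← ee_add]
      congr 2; ring
    rw [sum_congr rfl fun u _ => this u, ← sum_div, sum_comm]
    congr 1
    refine sum_congr rfl fun a _ => ?_
    rw [sum_comm]
  have h3 : ∑ u, μ u * ‖Th G s (u * ζ)‖ ^ 2 ≤ (m + m ^ 2 * τ) / (#G : ℝ) ^ 2 := by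
    have e1 : ∑ u, μ u * ‖Th G s (u * ζ)‖ ^ 2 = ‖((∑ u, μ u * ‖Th G s (u * ζ)‖ ^ 2 : ℝ) : ℂ)‖ := by
      rw [Complex.norm_real, Real.norm_of_nonneg]
      exact sum_nonneg fun u _ => mul_nonneg (hμ.1 u) (by positivity)
    rw [e1, h2, norm_div, norm_pow, Complex.norm_natCast]
    refine div_le_div_of_nonneg_right ?_ (sq_nonneg _)
    refine (norm_sum_le _ _).trans ?_
    calc ∑ a ∈ Gs, ‖∑ b ∈ Gs, ∑ u, (μ u : ℂ) * ee (ζ * (a.2 - b.2) * u)‖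
        ≤ ∑ a ∈ Gs, (1 + m * τ) := by
          refine sum_le_sum fun a ha => ?_
          refine (norm_sum_le _ _).trans ?_
          calc ∑ b ∈ Gs, ‖∑ u, (μ u : ℂ) * ee (ζ * (a.2 - b.2) * u)‖
              ≤ ∑ b ∈ Gs, ((if b = a then 1 else 0) + τ) := by
                refine sum_le_sum fun b hb => ?_
                by_cases hab : b = a
                · rw [if_pos hab]
                  refine le_trans ?_ (le_add_of_nonneg_right hτ)
                  have := avg_pow hμ (fun u => ee (ζ * (a.2 - b.2) * u)) 1
                  simpa [ee_norm, hμ.2] using this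
                · rw [if_neg hab, zero_add]
                  apply h
                  apply mul_ne_zero hζ
                  rw [sub_ne_zero]
                  intro h2
                  rw [hGs, mem_filter] at ha hb
                  exact hab (Prod.ext (hb.2.trans ha.2.symm) h2.symm)
            _ = 1 + m * τ := by
                rw [sum_add_distrib, sum_const, nsmul_eq_mul]
                simp [ha, hm]
      _ = m + m ^ 2 * τ := by rw [sum_const, nsmul_eq_mul]; ring
  have h4 : ((√m + m * √τ) / #G) ^ 2 ≥ (m + m ^ 2 * τ) / (#G : ℝ) ^ 2 := by
    rw [div_pow]
    apply div_le_div_of_nonneg_right _ (by positivity)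
    have a1 := Real.sq_sqrt hm0
    have a2 := Real.sq_sqrt hτ
    have a3 : 0 ≤ √m * (m * √τ) := by positivity
    calc m + m ^ 2 * τ = √m ^ 2 + m ^ 2 * √τ ^ 2 := by rw [a1, a2]
      _ ≤ _ := by nlinarith
  exact le_of_pow_le_pow_left₀ two_ne_zero (by positivity) (h1.trans (h3.trans h4))

theorem op_bound (hne : G.Nonempty) (hG : ∀ g ∈ G, g.1 ≠ 0) (k : ℕ) {τ : ℝ} (hτ : 0 ≤ τ)
    (h : ∀ ξ, ξ ≠ 0 → ‖SS (rat (sig G)) k ξ‖ ≤ τ) (F : ZMod p → ℂ) (hF : F 0 = 0) :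
    nn (TT G ((fun F => UU G (TT G F))^[k] F)) ≤
      (√((#(G.image Prod.fst) : ℝ) / #G) + √τ) * nn F := by
  have hpos : (0 : ℝ) < #G := by exact_mod_cast hne.card_pos
  have hσ0 := sig_zero hG
  have hσ := sig_prob hne
  set ρ := rat (sig G) with hρd
  have hρ0 : ρ 0 = 0 := rat_zero hσ0
  have hρ : IsProb ρ := rat_prob hσ0 hσ
  have hρs : ∀ v, ρ v⁻¹ = ρ v := rat_symm _
  set μ := rk ρ k with hμd
  have hμ : IsProb μ := rk_prob hρ0 hρ k
  have hμ0 : μ 0 = 0 := rk_zero hρ0 k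
  have hμs : ∀ v, μ v⁻¹ = μ v := rk_symm hρs k
  set f := (fun F => UU G (TT G F))^[k] F with hf
  set HH : ZMod p → ℝ := fun ω => ∑ s, ‖Th G s (s⁻¹ * ω)‖ with hHH
  have hHH0 : ∀ ω, 0 ≤ HH ω := fun ω => sum_nonneg fun _ _ => norm_nonneg _
  have s1 : nn (TT G f) ≤ ∑ ω, HH ω * ‖f ω‖ ^ 2 := by
    unfold nn
    refine (sum_le_sum fun ξ _ => TT_sq hne f ξ).trans (le_of_eq ?_)
    simp only [hHH, sum_mul]
    rw [sum_comm]
    conv_rhs => rw [sum_comm]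
    refine sum_congr rfl fun s _ => ?_
    by_cases hs : s = 0
    · subst hs; simp [Th_zero hG]
    rw [← sum_mulLeft (fun x => ‖Th G s (s⁻¹ * x)‖ * ‖f x‖ ^ 2) hs]
    refine sum_congr rfl fun x _ => ?_
    rw [inv_mul_cancel_left₀ hs]
  have s2 : ∑ ω, HH ω * ‖f ω‖ ^ 2 ≤ ∑ ω, ‖F ω‖ ^ 2 * ∑ u, μ u * HH (u * ω) := by
    calc ∑ ω, HH ω * ‖f ω‖ ^ 2 ≤ ∑ ω, HH ω * ∑ u, μ u * ‖F (u * ω)‖ ^ 2 := by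
          refine sum_le_sum fun ω _ => mul_le_mul_of_nonneg_left ?_ (hHH0 ω)
          exact Pk_sq hne hG k F ω
      _ = _ := by
          simp only [mul_sum]
          rw [sum_comm]
          conv_rhs => rw [sum_comm]
          rw [← Equiv.sum_comp (Equiv.inv (ZMod p))]
          refine sum_congr rfl fun u _ => ?_
          simp only [Equiv.inv_apply, hμs]
          by_cases hu : u = 0
          · subst hu; simp [hμ0]
          rw [← sum_mulLeft _ hu]
          refine sum_congr rfl fun x _ => ?_
          rw [inv_mul_cancel_left₀ hu]; ring
  have s3 : ∀ ω, ω ≠ 0 → ∑ u, μ u * HH (u * ω) ≤ √((#(G.image Prod.fst) : ℝ) / #G) + √τ := by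
    intro ω hω
    have e1 : ∑ u, μ u * HH (u * ω) = ∑ s ∈ G.image Prod.fst, ∑ u, μ u * ‖Th G s (u * (s⁻¹ * ω))‖ := by
      simp only [hHH, mul_sum]
      rw [sum_comm]
      symm
      have : ∀ s, ∑ u, μ u * ‖Th G s (u * (s⁻¹ * ω))‖ = ∑ u, μ u * ‖Th G s (s⁻¹ * (u * ω))‖ := by
        intro s
        refine sum_congr rfl fun u _ => ?_
        rw [mul_left_comm]
      rw [sum_congr rfl fun s _ => this s]
      apply sum_subset (subset_univ _)
      intro s _ hs
      refine sum_eq_zero fun u _ => ?_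
      have : (G.filter fun g => g.1 = s) = ∅ :=
        filter_eq_empty_iff.2 fun {g} hg hgs => hs (mem_image.2 ⟨g, hg, hgs⟩)
      unfold Th
      rw [this]; simp
    rw [e1]
    have hτ' : ∀ ξ, ξ ≠ 0 → ‖∑ x, (μ x : ℂ) * ee (ξ * x)‖ ≤ τ := by
      intro ξ hξ
      rw [← rk_SS hρ0]
      exact h ξ hξ
    have hsum : ∑ s ∈ G.image Prod.fst, (#(G.filter fun g => g.1 = s) : ℝ) = #G := by
      have := card_eq_sum_card_fiberwise (s := G) (t := G.image Prod.fst) (f := fun g => g.1)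
        (fun g hg => mem_image_of_mem _ hg)
      exact_mod_cast this.symm
    calc ∑ s ∈ G.image Prod.fst, ∑ u, μ u * ‖Th G s (u * (s⁻¹ * ω))‖
        ≤ ∑ s ∈ G.image Prod.fst, (√(#(G.filter fun g => g.1 = s) : ℝ) +
            #(G.filter fun g => g.1 = s) * √τ) / #G := by
          refine sum_le_sum fun s hs => ?_
          obtain ⟨g, hg, rfl⟩ := mem_image.1 hs
          exact Th_avg hne hμ hτ hτ' _ (mul_ne_zero (inv_ne_zero (hG g hg)) hω)
      _ = (∑ s ∈ G.image Prod.fst, √(#(G.filter fun g => g.1 = s) : ℝ)) / #G + √τ := by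
          rw [← sum_div, sum_add_distrib, ← sum_mul, hsum, add_div, mul_div_cancel_left₀ _ hpos.ne']
      _ ≤ _ := by
          gcongr
          apply Real.le_sqrt_of_sq_le
          rw [div_pow]
          have hcs := sq_sum_le_card_mul_sum_sq (s := G.image Prod.fst)
            (f := fun s => √(#(G.filter fun g => g.1 = s) : ℝ))
          simp only [Real.sq_sqrt (Nat.cast_nonneg _)] at hcs
          rw [hsum] at hcs
          rw [div_le_div_iff₀ (by positivity) hpos]
          calc _ ≤ (#(G.image Prod.fst) : ℝ) * #G * #G := by gcongr
            _ = _ := by ring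
  refine s1.trans (s2.trans ?_)
  unfold nn
  rw [mul_sum]
  refine sum_le_sum fun ω _ => ?_
  by_cases hω : ω = 0
  · subst hω; simp [hF]
  · rw [mul_comm]
    exact mul_le_mul_of_nonneg_right (s3 ω hω) (by positivity)

theorem op_final (hne : G.Nonempty) (hG : ∀ g ∈ G, g.1 ≠ 0) (k i : ℕ) (hki : k + 1 ≤ 2 ^ i)
    {τ : ℝ} (hτ : 0 ≤ τ)
    (h : ∀ ξ, ξ ≠ 0 → ‖SS (rat (sig G)) k ξ‖ ≤ τ) (F : ZMod p → ℂ) (hF : F 0 = 0) {b : ℝ}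
    (hb0 : 0 ≤ b)
    (hb : √((#(G.image Prod.fst) : ℝ) / #G) + √τ ≤ b ^ (2 ^ (i + 1))) :
    nn (TT G F) ≤ b * nn F := by
  have hσ0 := sig_zero hG
  have hσ := sig_prob hne
  have hch := op_chain (TT G) (UU G) (adj1 hG) (adj2 hG) F i
  have h1 : nn ((fun F => UU G (TT G F))^[2 ^ i] F) ≤ b ^ (2 ^ (i + 1)) * nn F := by
    obtain ⟨l, hl⟩ := Nat.exists_eq_add_of_le hki
    have hl' : 2 ^ i = (k + l) + 1 := by omega
    rw [hl', Function.iterate_succ_apply']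
    refine (UU_contr hne hG _).trans ?_
    refine (op_bound hne hG (k + l) hτ
      (SS_mono (rat_zero hσ0) (rat_prob hσ0 hσ) h l) F hF).trans ?_
    exact mul_le_mul_of_nonneg_right hb (nn_nonneg F)
  have h2 : nn (TT G F) ^ (2 ^ (i + 1)) ≤ (b * nn F) ^ (2 ^ (i + 1)) := by
    refine hch.trans ?_
    have hn := nn_nonneg F
    calc nn F ^ (2 ^ (i + 1) - 1) * nn ((fun F => UU G (TT G F))^[2 ^ i] F)
        ≤ nn F ^ (2 ^ (i + 1) - 1) * (b ^ (2 ^ (i + 1)) * nn F) := by gcongr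
      _ = b ^ (2 ^ (i + 1)) * (nn F ^ (2 ^ (i + 1) - 1) * nn F) := by ring
      _ = _ := by
        rw [← pow_succ, mul_pow, Nat.sub_add_cancel Nat.one_le_two_pow]
  exact le_of_pow_le_pow_left₀ (by positivity) (mul_nonneg hb0 (nn_nonneg F)) h2
end


section
variable {p : ℕ} [hp : Fact p.Prime] {G : Finset (ZMod p × ZMod p)}

theorem TT_eq (hne : G.Nonempty) (H : ZMod p → ℂ) (ξ : ZMod p) :
    (#G : ℂ) * TT G H ξ = ∑ g ∈ G, ee (ξ * g.2) * H (g.1 * ξ) := by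
  have hpos : (#G : ℂ) ≠ 0 := by exact_mod_cast hne.card_pos.ne'
  unfold TT Th
  rw [mul_sum, ← sum_fiberwise G Prod.fst]
  refine sum_congr rfl fun s _ => ?_
  have : ∑ g ∈ G with g.1 = s, ee (ξ * g.2) * H (g.1 * ξ) =
      (∑ g ∈ G with g.1 = s, ee (ξ * g.2)) * H (s * ξ) := by
    rw [sum_mul]
    refine sum_congr rfl fun g hg => ?_
    rw [(mem_filter.1 hg).2]
  rw [this]
  field_simp

theorem count_lem (hne : G.Nonempty) (hG : ∀ g ∈ G, g.1 ≠ 0) {b : ℝ} (hb0 : 0 ≤ b)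
    (hop : ∀ F : ZMod p → ℂ, F 0 = 0 → nn (TT G F) ≤ b * nn F) (X Y : Finset (ZMod p))
    (hY : ∀ x ∈ X, ∀ g ∈ G, g.1 * x + g.2 ∈ Y) :
    (#X : ℝ) * p ≤ #Y * (#X + b * p) := by
  rcases X.eq_empty_or_nonempty with hX | hX
  · subst hX; simp; positivity
  have hM : (0 : ℝ) < #G := by exact_mod_cast hne.card_pos
  have hN : (0 : ℝ) < #X := by exact_mod_cast hX.card_pos
  have hp0 : (0 : ℝ) < p := by exact_mod_cast hp.out.pos
  set r : ZMod p → ℝ := fun y => #((X ×ˢ G).filter fun z => z.2.1 * z.1 + z.2.2 = y) with hr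
  set fX : ZMod p → ℂ := ft (fun x => if x ∈ X then 1 else 0) with hfX
  have hfX' : ∀ ξ, fX ξ = ∑ x ∈ X, ee (ξ * x) := fun ξ => by
    simp only [hfX, ft, ite_mul, one_mul, zero_mul, sum_ite_mem, univ_inter]
  have hft : ∀ ξ, ft (fun y => (r y : ℂ)) ξ = #G * TT G fX ξ := by
    intro ξ
    rw [TT_eq hne]
    have e1 : ft (fun y => (r y : ℂ)) ξ = ∑ z ∈ X ×ˢ G, ee (ξ * (z.2.1 * z.1 + z.2.2)) := by
      unfold ft
      rw [← sum_fiberwise (X ×ˢ G) fun z => z.2.1 * z.1 + z.2.2]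
      refine sum_congr rfl fun y _ => ?_
      have : ∀ z ∈ (X ×ˢ G).filter (fun z => z.2.1 * z.1 + z.2.2 = y),
          ee (ξ * (z.2.1 * z.1 + z.2.2)) = ee (ξ * y) := fun z hz => by
        rw [(mem_filter.1 hz).2]
      rw [sum_congr rfl this, sum_const, nsmul_eq_mul]
      simp [hr]
    rw [e1, sum_product_right]
    refine sum_congr rfl fun g _ => ?_
    rw [hfX', mul_sum]
    refine sum_congr rfl fun x _ => ?_
    rw [← ee_add]
    congr 1; ring
  set F : ZMod p → ℂ := fun ξ => if ξ = 0 then 0 else fX ξ with hF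
  have hTT : ∀ ξ, ξ ≠ 0 → TT G fX ξ = TT G F ξ := by
    intro ξ hξ
    have hM' : (#G : ℂ) ≠ 0 := by exact_mod_cast hne.card_pos.ne'
    apply mul_left_cancel₀ hM'
    rw [TT_eq hne, TT_eq hne]
    refine sum_congr rfl fun g hg => ?_
    simp only [hF]
    rw [if_neg (mul_ne_zero (hG g hg) hξ)]
  have hnF : nn F ≤ p * #X := by
    have h1 : nn F ≤ ∑ ξ, ‖fX ξ‖ ^ 2 := by
      unfold nn
      refine sum_le_sum fun ξ _ => ?_
      simp only [hF]
      split_ifs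
      · simp
      · exact le_rfl
    refine h1.trans (le_of_eq ?_)
    rw [hfX, parseval]
    congr 1
    have : ∀ x : ZMod p, ‖(if x ∈ X then (1 : ℂ) else 0)‖ ^ 2 = if x ∈ X then (1 : ℝ) else 0 := fun x => by
      split_ifs <;> simp
    simp only [this]
    simp
  have hsumr : ∑ y, r y = #X * #G := by
    simp only [hr]
    rw [← Nat.cast_sum, ← card_eq_sum_card_fiberwise (fun z _ => mem_univ _), card_product]
    push_cast; rfl
  have hft0 : ‖ft (fun y => (r y : ℂ)) 0‖ = #X * #G := by
    rw [← hsumr]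
    unfold ft
    simp only [zero_mul, ee_zero, mul_one]
    rw [← Complex.ofReal_sum, Complex.norm_real, Real.norm_of_nonneg]
    exact sum_nonneg fun y _ => by simp [hr]
  have hpars := parseval (fun y => (r y : ℂ))
  have hup : ∑ ξ, ‖ft (fun y => (r y : ℂ)) ξ‖ ^ 2 ≤ (#X * #G : ℝ) ^ 2 + (#G : ℝ) ^ 2 * (b * (p * #X)) := by
    rw [← add_sum_erase univ _ (mem_univ (0 : ZMod p)), hft0]
    refine add_le_add le_rfl ?_
    calc ∑ ξ ∈ univ.erase (0 : ZMod p), ‖ft (fun y => (r y : ℂ)) ξ‖ ^ 2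
        = ∑ ξ ∈ univ.erase (0 : ZMod p), (#G : ℝ) ^ 2 * ‖TT G F ξ‖ ^ 2 := by
          refine sum_congr rfl fun ξ hξ => ?_
          rw [hft, hTT ξ (ne_of_mem_erase hξ), norm_mul, mul_pow, Complex.norm_natCast]
      _ = (#G : ℝ) ^ 2 * ∑ ξ ∈ univ.erase (0 : ZMod p), ‖TT G F ξ‖ ^ 2 := by rw [mul_sum]
      _ ≤ (#G : ℝ) ^ 2 * nn (TT G F) := by
          refine mul_le_mul_of_nonneg_left ?_ (sq_nonneg _)
          exact sum_le_sum_of_subset_of_nonneg (erase_subset _ _) fun _ _ _ => sq_nonneg _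
      _ ≤ _ := by
          refine mul_le_mul_of_nonneg_left ?_ (sq_nonneg _)
          refine (hop F (by simp [hF])).trans ?_
          exact mul_le_mul_of_nonneg_left hnF hb0
  have hr2 : ∀ y, ‖(r y : ℂ)‖ ^ 2 = r y ^ 2 := fun y => by
    rw [Complex.norm_real, Real.norm_eq_abs, sq_abs]
  simp only [hr2] at hpars
  rw [hpars] at hup
  have hsY : ∑ y ∈ Y, r y = #X * #G := by
    rw [← hsumr]
    refine sum_subset (subset_univ _) fun y _ hy => ?_
    simp only [hr]
    rw [Nat.cast_eq_zero, card_eq_zero, filter_eq_empty_iff]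
    intro z hz h
    rw [mem_product] at hz
    exact hy (h ▸ hY z.1 hz.1 z.2 hz.2)
  have hcs : (#X * #G : ℝ) ^ 2 ≤ #Y * ∑ y, r y ^ 2 := by
    rw [← hsY]
    refine sq_sum_le_card_mul_sum_sq.trans ?_
    refine mul_le_mul_of_nonneg_left ?_ (by positivity)
    exact sum_le_sum_of_subset_of_nonneg (subset_univ _) fun _ _ _ => sq_nonneg _
  have hfin : ((#X : ℝ) * p) * (#X * (#G : ℝ) ^ 2) ≤ (#Y * (#X + b * p)) * (#X * (#G : ℝ) ^ 2) := by
    calc ((#X : ℝ) * p) * (#X * (#G : ℝ) ^ 2) = p * (#X * #G : ℝ) ^ 2 := by ring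
      _ ≤ p * (#Y * ∑ y, r y ^ 2) := mul_le_mul_of_nonneg_left hcs hp0.le
      _ = #Y * (p * ∑ y, r y ^ 2) := by ring
      _ ≤ #Y * ((#X * #G : ℝ) ^ 2 + (#G : ℝ) ^ 2 * (b * (p * #X))) :=
          mul_le_mul_of_nonneg_left hup (by positivity)
      _ = _ := by ring
  exact le_of_mul_le_mul_right hfin (by positivity)

end


section
variable {p : ℕ} [hp : Fact p.Prime]

/-- the affine maps -/
def Gset (r : ZMod p) (B2 B3 : Finset (ZMod p)) : Finset (ZMod p × ZMod p) :=
  ((B2 ×ˢ B3).image fun z => (z.2 - r * z.1, z.1)).filter fun g => g.1 ≠ 0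

theorem mem_Gset {r : ZMod p} {B2 B3 : Finset (ZMod p)} {g : ZMod p × ZMod p} :
    g ∈ Gset r B2 B3 ↔ g.2 ∈ B2 ∧ g.1 + r * g.2 ∈ B3 ∧ g.1 ≠ 0 := by
  unfold Gset
  rw [mem_filter, mem_image]
  constructor
  · rintro ⟨⟨z, hz, rfl⟩, h⟩
    rw [mem_product] at hz
    refine ⟨hz.1, ?_, h⟩
    simpa using hz.2
  · rintro ⟨h1, h2, h3⟩
    refine ⟨⟨(g.2, g.1 + r * g.2), mem_product.2 ⟨h1, h2⟩, ?_⟩, h3⟩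
    ext <;> simp

theorem Gset_card (r : ZMod p) (B2 B3 : Finset (ZMod p)) :
    #B2 * #B3 ≤ #(Gset r B2 B3) + #B2 := by
  have hinj : Function.Injective (fun z : ZMod p × ZMod p => (z.2 - r * z.1, z.1)) := by
    rintro ⟨a, b⟩ ⟨c, d⟩ h
    simp only [Prod.mk.injEq] at h
    obtain ⟨h1, rfl⟩ := h
    simpa using h1
  rw [← card_product, ← card_image_of_injective (B2 ×ˢ B3) hinj,
    ← card_filter_add_card_filter_not (s := (B2 ×ˢ B3).image fun z => (z.2 - r * z.1, z.1)) (fun g => g.1 ≠ 0)]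
  refine Nat.add_le_add le_rfl ?_
  refine card_le_card_of_injOn Prod.snd ?_ ?_
  · intro g hg
    rw [mem_coe, mem_filter, mem_image] at hg
    obtain ⟨⟨z, hz, rfl⟩, _⟩ := hg
    exact (mem_product.1 hz).1
  · intro g hg g' hg' h
    rw [mem_coe, mem_filter] at hg hg'
    have a1 := hg.2
    have a2 := hg'.2
    simp only [ne_eq, not_not] at a1 a2
    exact Prod.ext (a1.trans a2.symm) h

theorem Gset_fib (r : ZMod p) (B2 B3 : Finset (ZMod p)) (s : ZMod p) :
    #((Gset r B2 B3).filter fun g => g.1 = s) ≤ #B2 := by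
  refine card_le_card_of_injOn Prod.snd ?_ ?_
  · intro g hg
    rw [mem_coe, mem_filter, mem_Gset] at hg
    exact hg.1.1
  · intro g hg g' hg' h
    rw [mem_coe, mem_filter] at hg hg'
    exact Prod.ext (hg.2.trans hg'.2.symm) h

theorem Gset_fst {r : ZMod p} {B1 B2 B3 : Finset (ZMod p)} (hr : r ∈ B1) :
    (Gset r B2 B3).image Prod.fst ⊆ diffSet p B3 (prodSet p B1 B2) := by
  intro s hs
  rw [mem_image] at hs
  obtain ⟨g, hg, rfl⟩ := hs
  rw [mem_Gset] at hg
  unfold diffSet prodSet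
  rw [mem_image]
  refine ⟨(g.1 + r * g.2, r * g.2), mem_product.2 ⟨hg.2.1, mem_image.2 ⟨(r, g.2), mem_product.2 ⟨hr, hg.1⟩, rfl⟩⟩, ?_⟩
  simp

theorem pick_r {A B1 : Finset (ZMod p)} (hB : 2 ≤ #B1) :
    ∃ r ∈ B1, #A ≤ 2 * #(A.erase (-r)) := by
  by_cases h1 : #A ≤ 1
  · rcases A.eq_empty_or_nonempty with h0 | ⟨a, ha⟩
    · obtain ⟨r, hr⟩ := card_pos.1 (by omega : 0 < #B1)
      exact ⟨r, hr, by simp [h0]⟩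
    · obtain ⟨r, hr, hne⟩ := exists_mem_ne (by omega : 1 < #B1) (-a)
      refine ⟨r, hr, ?_⟩
      have : a ∈ A.erase (-r) := mem_erase.2 ⟨fun h => hne (by rw [h, neg_neg]), ha⟩
      have := card_pos.2 ⟨a, this⟩
      omega
  · obtain ⟨r, hr⟩ := card_pos.1 (by omega : 0 < #B1)
    refine ⟨r, hr, ?_⟩
    have := pred_card_le_card_erase (s := A) (a := -r)
    omega

/-- the set of values -/
def Cset (A B1 B2 B3 : Finset (ZMod p)) : Finset (ZMod p) :=
  ((A ×ˢ B1 ×ˢ B2 ×ˢ B3).filter fun x =>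
    x.1 * x.2.2.1 + x.2.2.2 ≠ 0).image fun x => (x.1 + x.2.1) * (x.1 * x.2.2.1 + x.2.2.2)⁻¹

theorem mem_Cset {A B1 B2 B3 : Finset (ZMod p)} {a b c d : ZMod p} (ha : a ∈ A) (hb : b ∈ B1)
    (hc : c ∈ B2) (hd : d ∈ B3) (h : a * c + d ≠ 0) :
    (a + b) * (a * c + d)⁻¹ ∈ Cset A B1 B2 B3 := by
  unfold Cset
  rw [mem_image]
  exact ⟨(a, b, c, d), by simp [ha, hb, hc, hd, h], rfl⟩

theorem Cset_pos {A B1 B2 B3 : Finset (ZMod p)} (hA : A.Nonempty) (h1 : 2 ≤ #B1) (h2 : 2 ≤ #B2)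
    (h3 : 2 ≤ #B3) : 1 ≤ #(Cset A B1 B2 B3) := by
  obtain ⟨a, ha⟩ := hA
  obtain ⟨b, hb⟩ := card_pos.1 (by omega : 0 < #B1)
  obtain ⟨c, hc⟩ := card_pos.1 (by omega : 0 < #B2)
  obtain ⟨d, hd, hne⟩ := exists_mem_ne (by omega : 1 < #B3) (-(a * c))
  refine card_pos.2 ⟨_, mem_Cset ha hb hc hd ?_⟩
  intro h
  exact hne (by linear_combination h)

theorem main_count {A B1 B2 B3 : Finset (ZMod p)} {r : ZMod p} (hr : r ∈ B1)
    (hne : (Gset r B2 B3).Nonempty) {b : ℝ} (hb0 : 0 ≤ b)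
    (hop : ∀ F : ZMod p → ℂ, F 0 = 0 → nn (TT (Gset r B2 B3) F) ≤ b * nn F) :
    (#(A.erase (-r)) : ℝ) * p ≤ (#(Cset A B1 B2 B3) + 1) * (#(A.erase (-r)) + b * p) := by
  set X := (A.erase (-r)).image fun a => (a + r)⁻¹ with hX
  have hXc : #X = #(A.erase (-r)) := by
    apply card_image_of_injective
    intro a a' h
    simpa using h
  have h := count_lem hne (fun g hg => (mem_Gset.1 hg).2.2) hb0 hop X
    (insert 0 ((Cset A B1 B2 B3).image fun c => c⁻¹)) (by
      intro x hx g hg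
      rw [hX, mem_image] at hx
      obtain ⟨a, ha, rfl⟩ := hx
      rw [mem_erase] at ha
      rw [mem_Gset] at hg
      have har : a + r ≠ 0 := fun h => ha.1 (by linear_combination h)
      by_cases h0 : a * g.2 + (g.1 + r * g.2) = 0
      · apply mem_insert.2 ∘ Or.inl
        field_simp
        linear_combination h0
      · apply mem_insert_of_mem
        refine mem_image.2 ⟨_, mem_Cset ha.2 hr hg.1 hg.2.1 h0, ?_⟩
        rw [mul_inv, inv_inv]
        field_simp
        ring)
  rw [hXc] at h
  refine h.trans ?_
  refine mul_le_mul_of_nonneg_right ?_ (by positivity)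
  have h1 : #(insert 0 ((Cset A B1 B2 B3).image fun c => c⁻¹)) ≤ #(Cset A B1 B2 B3) + 1 :=
    (card_insert_le _ _).trans (Nat.add_le_add card_image_le le_rfl)
  exact_mod_cast h1

end

set_option maxHeartbeats 1000000 in
theorem big_case (ε : ℝ) (hε : 0 < ε) : ∃ δ : ℝ, 0 < δ ∧ ∃ P : ℕ, ∀ (p : ℕ) [Fact p.Prime], P ≤ p →
    ∀ (A B1 B2 B3 : Finset (ZMod p)) (n : ℕ), A.Nonempty → #B1 = n → #B2 = n → #B3 = n →
    (p : ℝ) ^ ε < (n : ℝ) → 2 ≤ n →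
    ((diffSet p B3 (prodSet p B1 B2)).card : ℝ) ≤ (n : ℝ) ^ 2 * (p : ℝ) ^ (-ε) →
    min (p : ℝ) (#A * (p : ℝ) ^ δ) ≤ 8 * #(Cset A B1 B2 B3) := by
  obtain ⟨k, γ, hγ, p0, hbgk⟩ := bgk (ε / 2) (by positivity)
  set μ := min ε γ with hμ
  have hμ0 : 0 < μ := lt_min hε hγ
  set m : ℕ := 2 ^ (k + 1 + 1) with hm
  have hm0 : (0 : ℝ) < m := by rw [hm]; positivity
  obtain ⟨P1, hP1⟩ := exists_nat_ge ((3 : ℝ) ^ (4 / μ))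
  refine ⟨μ / (4 * m), by positivity, max p0 P1, ?_⟩
  intro p hp hpP A B1 B2 B3 n hA h1 h2 h3 hn hn2 hd
  have hp1 : (1 : ℝ) ≤ p := by exact_mod_cast hp.out.one_lt.le
  have hp0 : (0 : ℝ) < p := by linarith
  set q : ℝ := (p : ℝ) ^ (-(μ / 4)) with hq
  have hq0 : 0 < q := Real.rpow_pos_of_pos hp0 _
  have hq3 : 3 * q ≤ 1 := by
    have : (3 : ℝ) ≤ (p : ℝ) ^ (μ / 4) := by
      have h : (3 : ℝ) ^ (4 / μ) ≤ p := hP1.trans (by exact_mod_cast (le_max_right p0 P1).trans hpP)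
      calc (3 : ℝ) = ((3 : ℝ) ^ (4 / μ)) ^ (μ / 4) := by
            rw [← Real.rpow_mul (by norm_num)]
            have : 4 / μ * (μ / 4) = 1 := by field_simp
            rw [this, Real.rpow_one]
        _ ≤ _ := Real.rpow_le_rpow (by positivity) h (by positivity)
    rw [hq, Real.rpow_neg hp0.le, ← div_eq_mul_inv, div_le_one (by positivity)]
    exact this
  have hq2 : q ^ 2 = (p : ℝ) ^ (-(μ / 2)) := by
    rw [hq, ← Real.rpow_natCast, ← Real.rpow_mul hp0.le]; congr 1; push_cast; ring
  have hq4 : q ^ 4 = (p : ℝ) ^ (-μ) := by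
    rw [hq, ← Real.rpow_natCast, ← Real.rpow_mul hp0.le]; congr 1; push_cast; ring
  have hpε : (p : ℝ) ^ (-ε) ≤ q ^ 4 := by
    rw [hq4]; exact Real.rpow_le_rpow_of_exponent_le hp1 (neg_le_neg (min_le_left _ _))
  have hpγ : (p : ℝ) ^ (-γ) ≤ q ^ 4 := by
    rw [hq4]; exact Real.rpow_le_rpow_of_exponent_le hp1 (neg_le_neg (min_le_right _ _))
  have hε2 : 2 * (p : ℝ) ^ (-ε) ≤ (p : ℝ) ^ (-(ε / 2)) := by
    have e : (p : ℝ) ^ (-ε) = (p : ℝ) ^ (-(ε / 2)) * (p : ℝ) ^ (-(ε / 2)) := by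
      rw [← Real.rpow_add hp0]; congr 1; ring
    have e2 : (p : ℝ) ^ (-(ε / 2)) ≤ q := by
      refine Real.rpow_le_rpow_of_exponent_le hp1 ?_
      have := min_le_left ε γ
      linarith
    have e3 : 0 < (p : ℝ) ^ (-(ε / 2)) := Real.rpow_pos_of_pos hp0 _
    rw [e]
    nlinarith
  obtain ⟨r, hr, hrA⟩ := pick_r (A := A) (B1 := B1) (by omega)
  set G := Gset r B2 B3 with hG
  have hn0 : (2 : ℝ) ≤ n := by exact_mod_cast hn2
  have hM : (n : ℝ) ^ 2 / 2 ≤ #G := by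
    have := Gset_card r B2 B3
    rw [h2, h3] at this
    have h' : (n : ℝ) * n ≤ #G + n := by exact_mod_cast this
    nlinarith
  have hMpos : (0 : ℝ) < #G := lt_of_lt_of_le (by positivity) hM
  have hne : G.Nonempty := card_pos.1 (by exact_mod_cast hMpos)
  have hG0 : ∀ g ∈ G, g.1 ≠ 0 := fun g hg => (mem_Gset.1 hg).2.2
  have hsig : ∀ s, sig G s ≤ (p : ℝ) ^ (-(ε / 2)) := by
    intro s
    refine le_trans ?_ hε2
    unfold sig
    rw [div_le_iff₀ hMpos]
    have a1 : (#(G.filter fun g => g.1 = s) : ℝ) ≤ n := by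
      have := Gset_fib r B2 B3 s
      rw [h2] at this
      exact_mod_cast this
    have a2 : 1 ≤ (p : ℝ) ^ (-ε) * n := by
      calc (1 : ℝ) = (p : ℝ) ^ (-ε) * (p : ℝ) ^ ε := by
            rw [← Real.rpow_add hp0]; simp
        _ ≤ _ := mul_le_mul_of_nonneg_left hn.le (by positivity)
    calc (#(G.filter fun g => g.1 = s) : ℝ) ≤ n * 1 := by linarith
      _ ≤ n * ((p : ℝ) ^ (-ε) * n) := mul_le_mul_of_nonneg_left a2 (by positivity)
      _ = 2 * (p : ℝ) ^ (-ε) * ((n : ℝ) ^ 2 / 2) := by ring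
      _ ≤ _ := mul_le_mul_of_nonneg_left hM (by positivity)
  have hσ := sig_prob hne
  have hσ0 := sig_zero hG0
  have hS := hbgk p ((le_max_left p0 P1).trans hpP) (rat (sig G)) (rat_prob hσ0 hσ) (rat_zero hσ0)
    (rat_le hσ hsig)
  set b : ℝ := (p : ℝ) ^ (-(μ / (4 * m))) with hb
  have hb0 : 0 < b := Real.rpow_pos_of_pos hp0 _
  have hbm : b ^ (2 ^ (k + 1 + 1)) = q := by
    rw [← hm, hb, hq, ← Real.rpow_natCast, ← Real.rpow_mul hp0.le]
    congr 1
    field_simp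
  have hbb : √((#(G.image Prod.fst) : ℝ) / #G) + √((p : ℝ) ^ (-γ)) ≤ b ^ (2 ^ (k + 1 + 1)) := by
    rw [hbm]
    have a1 : √((p : ℝ) ^ (-γ)) ≤ q ^ 2 := by
      refine Real.sqrt_le_iff.2 ⟨by positivity, hpγ.trans (le_of_eq (by ring))⟩
    have a2 : √((#(G.image Prod.fst) : ℝ) / #G) ≤ 2 * q ^ 2 := by
      refine Real.sqrt_le_iff.2 ⟨by positivity, ?_⟩
      rw [div_le_iff₀ hMpos]
      have c1 : (#(G.image Prod.fst) : ℝ) ≤ (n : ℝ) ^ 2 * (p : ℝ) ^ (-ε) := by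
        refine le_trans ?_ hd
        exact_mod_cast card_le_card (Gset_fst (B2 := B2) (B3 := B3) hr)
      calc (#(G.image Prod.fst) : ℝ) ≤ (n : ℝ) ^ 2 * (p : ℝ) ^ (-ε) := c1
        _ ≤ (n : ℝ) ^ 2 * q ^ 4 := mul_le_mul_of_nonneg_left hpε (by positivity)
        _ = (2 * q ^ 4) * ((n : ℝ) ^ 2 / 2) := by ring
        _ ≤ (2 * q ^ 4) * #G := mul_le_mul_of_nonneg_left hM (by positivity)
        _ ≤ (2 * q ^ 2) ^ 2 * #G := by
            refine mul_le_mul_of_nonneg_right ?_ hMpos.le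
            have : 0 ≤ q ^ 4 := by positivity
            nlinarith
    nlinarith
  have hop : ∀ F : ZMod p → ℂ, F 0 = 0 → nn (TT G F) ≤ b * nn F := fun F hF =>
    op_final hne hG0 k (k + 1) (Nat.lt_two_pow_self).le (Real.rpow_nonneg hp0.le _) hS F hF hb0.le hbb
  have hmain := main_count (A := A) hr hne hb0.le hop
  have hC := Cset_pos hA (B1 := B1) (B2 := B2) (B3 := B3) (by omega) (by omega) (by omega)
  have hC' : (1 : ℝ) ≤ #(Cset A B1 B2 B3) := by exact_mod_cast hC
  set C : ℝ := (#(Cset A B1 B2 B3) : ℝ) with hCd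
  set N : ℝ := (#(A.erase (-r)) : ℝ) with hN
  have hNA : (#A : ℝ) ≤ 2 * N := by rw [hN]; exact_mod_cast hrA
  have hN0 : 0 ≤ N := by rw [hN]; positivity
  set T := min (p : ℝ) (#A * (p : ℝ) ^ (μ / (4 * m))) with hT
  have hT1 : T ≤ p := min_le_left _ _
  have hT2 : T * b ≤ 2 * N := by
    calc T * b ≤ (#A * (p : ℝ) ^ (μ / (4 * m))) * b :=
          mul_le_mul_of_nonneg_right (min_le_right _ _) hb0.le
      _ = #A := by
          rw [hb, mul_assoc, ← Real.rpow_add hp0]; simp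
      _ ≤ _ := hNA
  have hpos : 0 < N + b * p := by positivity
  have : T * (N + b * p) ≤ (3 * (C + 1)) * (N + b * p) := by
    have b1 : T * N ≤ p * N := mul_le_mul_of_nonneg_right hT1 hN0
    have b2 : T * b * p ≤ 2 * N * p := mul_le_mul_of_nonneg_right hT2 hp0.le
    calc T * (N + b * p) = T * N + T * b * p := by ring
      _ ≤ p * N + 2 * N * p := add_le_add b1 b2
      _ = 3 * (N * p) := by ring
      _ ≤ 3 * ((C + 1) * (N + b * p)) := mul_le_mul_of_nonneg_left hmain (by norm_num)
      _ = _ := by ring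
  have := le_of_mul_le_mul_right this hpos
  linarith

theorem stmt17 :
    ∀ ε : ℝ, 0 < ε →
      ∃ δ : ℝ, 0 < δ ∧ ∃ c : ℝ, 0 < c ∧
        ∀ (p : ℕ), p.Prime → Odd p →
          ∀ (A B1 B2 B3 : Finset (ZMod p)) (n : ℕ),
            B1.card = n → B2.card = n → B3.card = n →
            (p : ℝ) ^ ε < (n : ℝ) →
            ((diffSet p B3 (prodSet p B1 B2)).card : ℝ) ≤ (n : ℝ) ^ 2 * (p : ℝ) ^ (-ε) →
            c * min (p : ℝ) ((A.card : ℝ) * (p : ℝ) ^ δ) ≤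
              ((((A ×ˢ B1 ×ˢ B2 ×ˢ B3).filter fun x =>
                  x.1 * x.2.2.1 + x.2.2.2 ≠ 0).image fun x =>
                    (x.1 + x.2.1) * (x.1 * x.2.2.1 + x.2.2.2)⁻¹).card : ℝ) := by
  intro ε hε
  obtain ⟨δ, hδ, P, hbig⟩ := big_case ε hε
  refine ⟨δ, hδ, min (1 / 8) (1 / ((P : ℝ) + 1)), by positivity, ?_⟩
  intro p hpp _ A B1 B2 B3 n h1 h2 h3 hn hd
  have : Fact p.Prime := ⟨hpp⟩
  change _ ≤ (#(Cset A B1 B2 B3) : ℝ)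
  have hp1 : (1 : ℝ) ≤ p := by exact_mod_cast hpp.one_lt.le
  have hT0 : 0 ≤ min (p : ℝ) ((A.card : ℝ) * (p : ℝ) ^ δ) := by positivity
  rcases A.eq_empty_or_nonempty with hA | hA
  · have : min (p : ℝ) ((A.card : ℝ) * (p : ℝ) ^ δ) ≤ 0 := by
      refine (min_le_right _ _).trans ?_
      simp [hA]
    rw [le_antisymm this hT0, mul_zero]
    positivity
  have hn2 : 2 ≤ n := by
    have : (1 : ℝ) < n := lt_of_le_of_lt (Real.one_le_rpow hp1 hε.le) hn
    exact_mod_cast this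
  rcases le_or_gt P p with hP | hP
  · have := hbig p hP A B1 B2 B3 n hA h1 h2 h3 hn hn2 hd
    calc _ ≤ (1 / 8) * min (p : ℝ) ((A.card : ℝ) * (p : ℝ) ^ δ) :=
          mul_le_mul_of_nonneg_right (min_le_left _ _) hT0
      _ ≤ _ := by linarith
  · have hC := Cset_pos hA (B1 := B1) (B2 := B2) (B3 := B3) (by omega) (by omega) (by omega)
    have hC' : (1 : ℝ) ≤ #(Cset A B1 B2 B3) := by exact_mod_cast hC
    refine le_trans ?_ hC'
    have hPp : (p : ℝ) ≤ (P : ℝ) + 1 := by exact_mod_cast (by omega : p ≤ P + 1)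
    calc _ ≤ (1 / ((P : ℝ) + 1)) * p :=
          mul_le_mul (min_le_right _ _) (min_le_left _ _) hT0 (by positivity)
      _ ≤ 1 := by rw [one_div_mul_eq_div, div_le_one (by positivity)]; exact hPp
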